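/- arXiv:2110.01838 — 7 statements merged into one kernel-verified Lean document; each statement's English description precedes it below -/
import Mathlib

section
/- Let n ≥ 4 and let S be a minimal dominating set of the flower snark J_n. If some copy J^i has weight 3 in S, then both adjacent copies J^{i−1} and J^{i+1} (indices mod n) have weight 1 in S. -/
/-- Vertices of the flower snark `J_n`: a copy index `i : Fin n` together with
one of the four vertices of the copy: `0 = a`, `1 = b`, `2 = c`, `3 = d`. -/
abbrev FV (n : ℕ) := Fin n × Fin 4

/-- The flower snark `J_n`: in each copy, `a^i` is adjacent to `b^i, c^i, d^i`;
the `b` vertices form an `n`-cycle; the `c` and `d` vertices form a `2n`-cycle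
via the paths `c^i c^{i+1}`, `d^i d^{i+1}` (for `1 ≤ i ≤ n-1`) together with the
twist edges `c^n d^1` and `d^n c^1`. -/
def flowerSnark (n : ℕ) : SimpleGraph (FV n) :=
  SimpleGraph.fromRel (fun v w =>
    (v.1 = w.1 ∧ v.2 = 0 ∧ w.2 ≠ 0) ∨
    (((v.1 : ℕ) + 1) % n = (w.1 : ℕ) ∧ v.2 = 1 ∧ w.2 = 1) ∨
    ((v.1 : ℕ) + 1 = (w.1 : ℕ) ∧ v.2 = 2 ∧ w.2 = 2) ∨
    ((v.1 : ℕ) + 1 = (w.1 : ℕ) ∧ v.2 = 3 ∧ w.2 = 3) ∨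
    ((v.1 : ℕ) = n - 1 ∧ (w.1 : ℕ) = 0 ∧ v.2 = 2 ∧ w.2 = 3) ∨
    ((v.1 : ℕ) = n - 1 ∧ (w.1 : ℕ) = 0 ∧ v.2 = 3 ∧ w.2 = 2))

/-- `S` is a dominating set of `J_n`. -/
def Dominating (n : ℕ) (S : Set (FV n)) : Prop :=
  ∀ v ∉ S, ∃ w ∈ S, (flowerSnark n).Adj v w

/-- `S` is a minimal dominating set of `J_n`. -/
def MinimalDominating (n : ℕ) (S : Set (FV n)) : Prop :=
  Dominating n S ∧ ∀ T : Set (FV n), T ⊂ S → ¬ Dominating n T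

/-- `S` is an independent set of `J_n`. -/
def IndependentSet (n : ℕ) (S : Set (FV n)) : Prop :=
  ∀ v ∈ S, ∀ w ∈ S, ¬ (flowerSnark n).Adj v w

/-- `S` is a 2-dominating set of `J_n`: every vertex outside `S` has at least
two neighbours in `S`. -/
def TwoDominating (n : ℕ) (S : Set (FV n)) : Prop :=
  ∀ v ∉ S, ∃ w₁ ∈ S, ∃ w₂ ∈ S, w₁ ≠ w₂ ∧
    (flowerSnark n).Adj v w₁ ∧ (flowerSnark n).Adj v w₂

/-- `S` is a total dominating set of `J_n`. -/
def TotalDominating (n : ℕ) (S : Set (FV n)) : Prop :=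
  ∀ v : FV n, ∃ w ∈ S, (flowerSnark n).Adj v w

/-- `S` is a connected dominating set of `J_n`. -/
def ConnectedDominating (n : ℕ) (S : Set (FV n)) : Prop :=
  Dominating n S ∧ ((flowerSnark n).induce S).Connected

/-- `S` is a secure dominating set of `J_n`. -/
def SecureDominating (n : ℕ) (S : Set (FV n)) : Prop :=
  Dominating n S ∧ ∀ v ∉ S, ∃ w ∈ S,
    (flowerSnark n).Adj v w ∧ Dominating n (insert v (S \ {w}))

/-- `v` is undefended with respect to `f`: neither `v` nor any of its
neighbours carries a guard. -/
def Undefended (n : ℕ) (f : FV n → ℕ) (v : FV n) : Prop :=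
  f v = 0 ∧ ∀ w, (flowerSnark n).Adj v w → f w = 0

/-- `f` is a weak Roman dominating function on `J_n`: `f` takes values in
`{0,1,2}`, has no undefended vertex, and every vertex `v` with `f v = 0` has a
neighbour `w` with `f w ≥ 1` such that moving one guard from `w` to `v` leaves
no undefended vertex. -/
def WeakRomanDominating (n : ℕ) (f : FV n → ℕ) : Prop :=
  (∀ v, f v ≤ 2) ∧ (∀ v, ¬ Undefended n f v) ∧
  ∀ v, f v = 0 → ∃ w, (flowerSnark n).Adj v w ∧ 1 ≤ f w ∧
    ∀ u, ¬ Undefended n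
      (fun x => if x = v then 1 else if x = w then f w - 1 else f x) u

/-- The domination number of `J_n`. -/
noncomputable def dominationNumber (n : ℕ) : ℕ :=
  sInf {k | ∃ S : Set (FV n), Dominating n S ∧ S.ncard = k}

/-- The independent domination number of `J_n`. -/
noncomputable def indepDominationNumber (n : ℕ) : ℕ :=
  sInf {k | ∃ S : Set (FV n), Dominating n S ∧ IndependentSet n S ∧ S.ncard = k}

/-- The upper domination number of `J_n`: the maximum cardinality of a minimal
dominating set. -/
noncomputable def upperDominationNumber (n : ℕ) : ℕ :=
  sSup {k | ∃ S : Set (FV n), MinimalDominating n S ∧ S.ncard = k}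

/-- The 2-domination number of `J_n`. -/
noncomputable def twoDominationNumber (n : ℕ) : ℕ :=
  sInf {k | ∃ S : Set (FV n), TwoDominating n S ∧ S.ncard = k}

/-- The total domination number of `J_n`. -/
noncomputable def totalDominationNumber (n : ℕ) : ℕ :=
  sInf {k | ∃ S : Set (FV n), TotalDominating n S ∧ S.ncard = k}

/-- The connected domination number of `J_n`. -/
noncomputable def connectedDominationNumber (n : ℕ) : ℕ :=
  sInf {k | ∃ S : Set (FV n), ConnectedDominating n S ∧ S.ncard = k}

/-- The secure domination number of `J_n`. -/
noncomputable def secureDominationNumber (n : ℕ) : ℕ :=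
  sInf {k | ∃ S : Set (FV n), SecureDominating n S ∧ S.ncard = k}

/-- The weak Roman domination number of `J_n`. -/
noncomputable def weakRomanDominationNumber (n : ℕ) : ℕ :=
  sInf {k | ∃ f : FV n → ℕ, WeakRomanDominating n f ∧ ∑ v, f v = k}

/-- The weight of the copy `J^(m mod n)` in a vertex set `S`, i.e. the number
of vertices of `S` among `a, b, c, d` of that copy. -/
noncomputable def copyWeight {n : ℕ} (S : Set (FV n)) (m : ℕ) : ℕ :=
  (S ∩ {v : FV n | (v.1 : ℕ) = m % n}).ncard

/-- The weight of the copy `J^(m mod n)` in a function `f`, i.e.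
`f a + f b + f c + f d` over that copy. -/
def fCopyWeight {n : ℕ} (f : FV n → ℕ) (m : ℕ) : ℕ :=
  ∑ v ∈ Finset.univ.filter (fun v : FV n => (v.1 : ℕ) = m % n), f v

def nxt (n : ℕ) [NeZero n] : Equiv.Perm (FV n) where
  toFun v := (v.1 + 1, if v.1 + 1 = 0 then Equiv.swap 2 3 v.2 else v.2)
  invFun v := (v.1 - 1, if v.1 = 0 then Equiv.swap 2 3 v.2 else v.2)
  left_inv v := by
    rcases v with ⟨i, t⟩
    by_cases h : i + 1 = 0 <;> simp [h, add_sub_cancel_right]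
    exact (eq_neg_of_add_eq_zero_left h).symm
  right_inv v := by
    rcases v with ⟨i, t⟩
    by_cases h : i = 0 <;> simp [h]

lemma nxt_snd_zero (n : ℕ) [NeZero n] (v : FV n) : (nxt n v).2 = 0 ↔ v.2 = 0 := by
  rcases v with ⟨i, t⟩
  by_cases h : i + 1 = 0
  · simp only [nxt, Equiv.coe_fn_mk, h, if_true]
    revert t; decide
  · simp [nxt, h]

lemma pl1 {P J F T a b c d e q r : Prop} (hF : ¬ F) (hT : T) (k : (a ∨ d ∨ e) ↔ (q ∧ r)) :
    (P ∨ (J ∧ a) ∨ (F ∧ b) ∨ (F ∧ c) ∨ (T ∧ J ∧ d) ∨ (T ∧ J ∧ e)) ↔ (P ∨ (q ∧ J ∧ r)) := by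
  by_cases J <;> by_cases P <;> simp_all

lemma pl2 {P J Z T a b c d e q r : Prop} (hT : ¬ T) (k : (a ∨ b ∨ c) ↔ (q ∧ r)) :
    (P ∨ (J ∧ a) ∨ (J ∧ b) ∨ (J ∧ c) ∨ (T ∧ Z ∧ d) ∨ (T ∧ Z ∧ e)) ↔ (P ∨ (q ∧ J ∧ r)) := by
  by_cases J <;> by_cases P <;> simp_all

lemma rel_iff (n : ℕ) [NeZero n] (hn : 4 ≤ n) (v w : FV n) :
    ((v.1 = w.1 ∧ v.2 = 0 ∧ w.2 ≠ 0) ∨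
    (((v.1 : ℕ) + 1) % n = (w.1 : ℕ) ∧ v.2 = 1 ∧ w.2 = 1) ∨
    ((v.1 : ℕ) + 1 = (w.1 : ℕ) ∧ v.2 = 2 ∧ w.2 = 2) ∨
    ((v.1 : ℕ) + 1 = (w.1 : ℕ) ∧ v.2 = 3 ∧ w.2 = 3) ∨
    ((v.1 : ℕ) = n - 1 ∧ (w.1 : ℕ) = 0 ∧ v.2 = 2 ∧ w.2 = 3) ∨
    ((v.1 : ℕ) = n - 1 ∧ (w.1 : ℕ) = 0 ∧ v.2 = 3 ∧ w.2 = 2)) ↔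
    ((v.1 = w.1 ∧ v.2 = 0 ∧ w.2 ≠ 0) ∨ (v.2 ≠ 0 ∧ w = nxt n v)) := by
  rcases v with ⟨i, t⟩
  rcases w with ⟨j, u⟩
  have h1 : ((i + 1 : Fin n) : ℕ) = ((i : ℕ) + 1) % n := by
    rw [Fin.val_add]; simp
  have h0 : ((0 : Fin n) : ℕ) = 0 := by simp
  have hi := i.2
  have hj := j.2
  simp only [nxt, Equiv.coe_fn_mk, Prod.mk.injEq, Fin.ext_iff (a := j), Fin.ext_iff (a := i + 1), h1, h0]
  by_cases h : (i : ℕ) + 1 = n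
  · have h2 : ((i : ℕ) + 1) % n = 0 := by rw [h]; simp
    have h3 : (i : ℕ) = n - 1 := by omega
    have h4 : ¬ ((i : ℕ) + 1 = j) := by omega
    rw [if_pos h2, h2]
    have h5 : ((0:ℕ) = (j:ℕ)) ↔ ((j:ℕ) = 0) := eq_comm
    rw [h5]
    have key : ∀ t u : Fin 4, (t = 1 ∧ u = 1 ∨ t = 2 ∧ u = 3 ∨ t = 3 ∧ u = 2) ↔ (t ≠ 0 ∧ u = Equiv.swap 2 3 t) := by decide
    exact pl1 h4 h3 (key t u)
  · have h2 : ((i : ℕ) + 1) % n = i + 1 := Nat.mod_eq_of_lt (by omega)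
    have h3 : ¬ (i : ℕ) = n - 1 := by omega
    have h4 : ¬ ((i : ℕ) + 1 = 0) := by omega
    rw [if_neg (by rw [h2]; exact h4), h2]
    have h5 : ((i:ℕ) + 1 = (j:ℕ)) ↔ ((j:ℕ) = i + 1) := eq_comm
    rw [h5]
    have key : ∀ t u : Fin 4, (t = 1 ∧ u = 1 ∨ t = 2 ∧ u = 2 ∨ t = 3 ∧ u = 3) ↔ (t ≠ 0 ∧ u = t) := by decide
    exact pl2 h3 (key t u)

lemma nxt_fst (n : ℕ) [NeZero n] (v : FV n) : (nxt n v).1 = v.1 + 1 := rfl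

lemma symm_fst (n : ℕ) [NeZero n] (v : FV n) : ((nxt n).symm v).1 = v.1 - 1 := rfl

lemma symm_snd_zero (n : ℕ) [NeZero n] (v : FV n) : ((nxt n).symm v).2 = 0 ↔ v.2 = 0 := by
  have := nxt_snd_zero n ((nxt n).symm v)
  rw [Equiv.apply_symm_apply] at this
  exact this.symm

lemma one_ne (n : ℕ) [NeZero n] (hn : 4 ≤ n) : (1 : Fin n) ≠ 0 := by
  intro h
  have := congrArg Fin.val h
  rw [Fin.val_one', Nat.mod_eq_of_lt (by omega)] at this
  simp at this

lemma two_ne (n : ℕ) [NeZero n] (hn : 4 ≤ n) : (1 + 1 : Fin n) ≠ 0 := by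
  intro h
  have := congrArg Fin.val h
  rw [Fin.val_add, Fin.val_one', Nat.mod_eq_of_lt (a := 1) (by omega),
    Nat.mod_eq_of_lt (by omega)] at this
  simp at this

lemma nxt_ne (n : ℕ) [NeZero n] (hn : 4 ≤ n) (v : FV n) : v ≠ nxt n v := by
  intro h
  have := congrArg Prod.fst h
  rw [nxt_fst] at this
  exact one_ne n hn (left_eq_add.mp this)

lemma adj_iff (n : ℕ) [NeZero n] (hn : 4 ≤ n) (v w : FV n) :
    (flowerSnark n).Adj v w ↔
    ((v.1 = w.1 ∧ v.2 = 0 ∧ w.2 ≠ 0) ∨ (v.1 = w.1 ∧ w.2 = 0 ∧ v.2 ≠ 0) ∨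
     (v.2 ≠ 0 ∧ (w = nxt n v ∨ w = (nxt n).symm v))) := by
  unfold flowerSnark
  rw [SimpleGraph.fromRel_adj]
  rw [rel_iff n hn v w, rel_iff n hn w v]
  have e : v = nxt n w ↔ w = (nxt n).symm v := by
    rw [Equiv.eq_symm_apply]; exact eq_comm
  constructor
  · rintro ⟨_, (h | h) | (h | ⟨h, h'⟩)⟩
    · tauto
    · tauto
    · right; left; exact ⟨h.1.symm, h.2⟩
    · right; right
      refine ⟨?_, Or.inr (e.1 h')⟩
      rw [h', Ne, nxt_snd_zero]; exact h
  · rintro (h | h | ⟨h, h' | h'⟩)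
    · exact ⟨fun x => h.2.2 (x ▸ h.2.1), by tauto⟩
    · exact ⟨fun x => h.2.2 (x ▸ h.2.1), Or.inr (Or.inl ⟨h.1.symm, h.2⟩)⟩
    · exact ⟨h' ▸ nxt_ne n hn v, by tauto⟩
    · have h2 := e.2 h'
      refine ⟨?_, Or.inr (Or.inr ⟨?_, h2⟩)⟩
      · rw [h2]; exact (nxt_ne n hn w).symm
      · rw [h', Ne, symm_snd_zero]; exact h

/-- the vertex in lane `t` at offset `k` from copy `i` -/
def ln (n : ℕ) [NeZero n] (i : Fin n) (k : ℤ) (t : Fin 4) : FV n := ((nxt n) ^ k) (i, t)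

lemma ln_succ (n : ℕ) [NeZero n] (i : Fin n) (k : ℤ) (t : Fin 4) :
    nxt n (ln n i k t) = ln n i (k+1) t := by
  unfold ln
  rw [add_comm k 1, zpow_add, zpow_one]; rfl

lemma ln_pred (n : ℕ) [NeZero n] (i : Fin n) (k : ℤ) (t : Fin 4) :
    (nxt n).symm (ln n i k t) = ln n i (k-1) t := by
  rw [Equiv.symm_apply_eq, ln_succ]; simp

lemma ln_zero (n : ℕ) [NeZero n] (i : Fin n) (t : Fin 4) : ln n i 0 t = (i, t) := rfl

lemma ln_snd (n : ℕ) [NeZero n] (i : Fin n) (k : ℤ) (t : Fin 4) :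
    (ln n i k t).2 = 0 ↔ t = 0 := by
  induction k using Int.induction_on with
  | zero => rfl
  | succ m ih => rw [← ln_succ, nxt_snd_zero, ih]
  | pred m ih => rw [← ln_pred, symm_snd_zero, ih]

lemma ln_fst (n : ℕ) [NeZero n] (i : Fin n) (k : ℤ) (t : Fin 4) :
    (ln n i k t).1 = (ln n i k 0).1 := by
  induction k using Int.induction_on with
  | zero => rfl
  | succ m ih => rw [← ln_succ, nxt_fst, ih, ← ln_succ, nxt_fst]
  | pred m ih => rw [← ln_pred, symm_fst, ih, ← ln_pred, symm_fst]

lemma ln_inj (n : ℕ) [NeZero n] (i : Fin n) (k : ℤ) : Function.Injective (ln n i k) := by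
  intro t u h
  have := ((nxt n) ^ k).injective h
  exact congrArg Prod.snd this

lemma ln_surj (n : ℕ) [NeZero n] (i : Fin n) (k : ℤ) (w : FV n) (h : w.1 = (ln n i k 0).1) :
    ∃ t, w = ln n i k t := by
  have hinj : Function.Injective (fun t => (ln n i k t).2) := by
    intro t u h
    exact ln_inj n i k (Prod.ext ((ln_fst n i k t).trans (ln_fst n i k u).symm) h)
  obtain ⟨t, ht⟩ := Finite.injective_iff_surjective.mp hinj w.2
  exact ⟨t, Prod.ext (h.trans (ln_fst n i k t).symm) ht.symm⟩

lemma adj_hub (n : ℕ) [NeZero n] (hn : 4 ≤ n) (i : Fin n) (k : ℤ) (w : FV n) :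
    (flowerSnark n).Adj (ln n i k 0) w ↔ ∃ t, t ≠ 0 ∧ w = ln n i k t := by
  have hh := (ln_snd n i k 0).2 rfl
  rw [adj_iff n hn]
  constructor
  · rintro (h | h | h)
    · obtain ⟨t, ht⟩ := ln_surj n i k w h.1.symm
      refine ⟨t, ?_, ht⟩
      rintro rfl
      rw [ht] at h; exact h.2.2 hh
    · exact absurd hh h.2.2
    · exact absurd hh h.1
  · rintro ⟨t, ht, rfl⟩
    left
    exact ⟨(ln_fst n i k t).symm, hh, fun h => ht ((ln_snd n i k t).1 h)⟩

lemma adj_rim (n : ℕ) [NeZero n] (hn : 4 ≤ n) (i : Fin n) (k : ℤ) (t : Fin 4) (ht : t ≠ 0)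
    (w : FV n) :
    (flowerSnark n).Adj (ln n i k t) w ↔
      (w = ln n i k 0 ∨ w = ln n i (k+1) t ∨ w = ln n i (k-1) t) := by
  have hh := (ln_snd n i k t).not.2 ht
  have h0 := (ln_snd n i k 0).2 rfl
  rw [adj_iff n hn, ln_succ, ln_pred]
  constructor
  · rintro (h | h | h)
    · exact absurd h.2.1 hh
    · left
      exact Prod.ext (h.1.symm.trans (ln_fst n i k t)) (h.2.1.trans h0.symm)
    · tauto
  · rintro (rfl | h)
    · right; left; exact ⟨ln_fst n i k t, h0, hh⟩
    · tauto

lemma ln_two (n : ℕ) [NeZero n] (hn : 4 ≤ n) (i : Fin n) (k : ℤ) (t u : Fin 4) :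
    ln n i (k+1+1) t ≠ ln n i k u := by
  intro h
  have := congrArg Prod.fst h
  rw [← ln_succ, ← ln_succ, nxt_fst, nxt_fst, ln_fst, ln_fst n i k u, add_assoc] at this
  exact two_ne n hn (add_eq_left.mp this)

lemma ln_one (n : ℕ) [NeZero n] (hn : 4 ≤ n) (i : Fin n) (k : ℤ) (t u : Fin 4) :
    ln n i (k+1) t ≠ ln n i k u := by
  intro h
  have := congrArg Prod.fst h
  rw [← ln_succ, nxt_fst, ln_fst, ln_fst n i k u] at this
  exact one_ne n hn (add_eq_left.mp this)

lemma priv (n : ℕ) (S : Set (FV n)) (hS : MinimalDominating n S) (v : FV n) (hv : v ∈ S) :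
    (∀ w, (flowerSnark n).Adj v w → w ∉ S) ∨
    ∃ u, u ∉ S ∧ (flowerSnark n).Adj v u ∧ ∀ w, (flowerSnark n).Adj u w → w ≠ v → w ∉ S := by
  have h := hS.2 (S \ {v}) ⟨Set.sdiff_subset, fun h => (h hv).2 rfl⟩
  unfold Dominating at h
  push Not at h
  obtain ⟨u, hu, h⟩ := h
  by_cases e : u = v
  · subst e
    left
    intro w hw hwS
    exact h w ⟨hwS, fun x => hw.ne (Set.mem_singleton_iff.1 x).symm⟩ hw
  · right
    have huS : u ∉ S := fun x => hu ⟨x, e⟩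
    have h2 : ∀ w, (flowerSnark n).Adj u w → w ≠ v → w ∉ S :=
      fun w hw hwv hwS => h w ⟨hwS, hwv⟩ hw
    refine ⟨u, huS, ?_, h2⟩
    obtain ⟨w, hw, ha⟩ := hS.1 u huS
    by_cases hwv : w = v
    · subst hwv; exact ha.symm
    · exact absurd hw (h2 w ha hwv)

lemma dom_hub (n : ℕ) [NeZero n] (hn : 4 ≤ n) (S : Set (FV n)) (hS : MinimalDominating n S)
    (i : Fin n) (k : ℤ) : ∃ t, ln n i k t ∈ S := by
  by_contra hc
  push Not at hc
  obtain ⟨w, hw, ha⟩ := hS.1 _ (hc 0)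
  obtain ⟨t, _, rfl⟩ := (adj_hub n hn i k w).1 ha
  exact hc t hw

lemma priv_hub (n : ℕ) [NeZero n] (hn : 4 ≤ n) (S : Set (FV n)) (hS : MinimalDominating n S)
    (i : Fin n) (k : ℤ) (h : ln n i k 0 ∈ S) :
    (∀ t, t ≠ 0 → ln n i k t ∉ S) ∨
    ∃ t, t ≠ 0 ∧ ln n i k t ∉ S ∧ ln n i (k+1) t ∉ S ∧ ln n i (k-1) t ∉ S := by
  rcases priv n S hS _ h with h | ⟨u, hu, ha, h⟩
  · left
    intro t ht
    exact h _ ((adj_hub n hn i k _).2 ⟨t, ht, rfl⟩)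
  · right
    obtain ⟨t, ht, rfl⟩ := (adj_hub n hn i k u).1 ha
    have q := adj_rim n hn i k t ht
    refine ⟨t, ht, hu, h _ ((q _).2 (by tauto)) (ln_one n hn i k _ _),
      h _ ((q _).2 (by tauto)) ?_⟩
    have := ln_one n hn i (k-1) 0 t
    rw [sub_add_cancel] at this
    exact this.symm

lemma priv_rim (n : ℕ) [NeZero n] (hn : 4 ≤ n) (S : Set (FV n)) (hS : MinimalDominating n S)
    (i : Fin n) (k : ℤ) (t : Fin 4) (ht : t ≠ 0) (h : ln n i k t ∈ S) :
    (ln n i k 0 ∉ S ∧ ln n i (k+1) t ∉ S ∧ ln n i (k-1) t ∉ S) ∨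
    (ln n i k 0 ∉ S ∧ ∀ u, u ≠ 0 → u ≠ t → ln n i k u ∉ S) ∨
    (ln n i (k+1) t ∉ S ∧ ln n i (k+1) 0 ∉ S ∧ ln n i (k+2) t ∉ S) ∨
    (ln n i (k-1) t ∉ S ∧ ln n i (k-1) 0 ∉ S ∧ ln n i (k-2) t ∉ S) := by
  have q := adj_rim n hn i k t ht
  rcases priv n S hS _ h with h | ⟨u, hu, ha, h⟩
  · left
    exact ⟨h _ ((q _).2 (by tauto)), h _ ((q _).2 (by tauto)), h _ ((q _).2 (by tauto))⟩
  · right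
    rcases (q u).1 ha with rfl | rfl | rfl
    · left
      refine ⟨hu, fun u hu hut => ?_⟩
      exact h _ ((adj_hub n hn i k _).2 ⟨u, hu, rfl⟩) (fun x => hut (ln_inj n i k x))
    · right; left
      have q := adj_rim n hn i (k+1) t ht
      refine ⟨hu, h _ ((q _).2 (by tauto)) (ln_one n hn i k _ _), ?_⟩
      rw [show k + 2 = k + 1 + 1 by ring]
      exact h _ ((q _).2 (by tauto)) (ln_two n hn i k _ _)
    · right; right
      have q := adj_rim n hn i (k-1) t ht
      refine ⟨hu, h _ ((q _).2 (by tauto)) ?_, ?_⟩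
      · have := ln_one n hn i (k-1) t 0
        rw [sub_add_cancel] at this
        exact this.symm
      · rw [show k - 2 = k - 1 - 1 by ring]
        refine h _ ((q _).2 (by tauto)) ?_
        have := ln_two n hn i (k-1-1) t t
        rw [sub_add_cancel, sub_add_cancel] at this
        exact this.symm

lemma weight_eq (n : ℕ) [NeZero n] (S : Set (FV n)) (i : Fin n) (k : ℤ) (m : ℕ)
    (hm : ((ln n i k 0).1 : ℕ) = m % n) :
    copyWeight S m = {t | ln n i k t ∈ S}.ncard := by
  unfold copyWeight
  rw [← Set.ncard_image_of_injective _ (ln_inj n i k)]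
  congr 1
  ext w
  simp only [Set.mem_inter_iff, Set.mem_ofPred_eq, Set.mem_image]
  constructor
  · rintro ⟨h1, h2⟩
    obtain ⟨t, rfl⟩ := ln_surj n i k w (Fin.ext (h2.trans hm.symm))
    exact ⟨t, h1, rfl⟩
  · rintro ⟨t, h, rfl⟩
    exact ⟨h, by rw [ln_fst]; exact hm⟩

lemma ncard_fin4 (p : Fin 4 → Prop) [DecidablePred p] : {t | p t}.ncard =
    (if p 0 then 1 else 0) + (if p 1 then 1 else 0) + (if p 2 then 1 else 0)
      + (if p 3 then 1 else 0) := by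
  rw [Set.ncard_eq_toFinset_card', Set.toFinset_ofPred, Finset.card_filter,
    Fin.sum_univ_four]

lemma comb (s : ℤ → Fin 4 → Prop)
    (d : ∀ k, ∃ t, s k t)
    (ph : ∀ k, s k 0 → (∀ t, t ≠ 0 → ¬ s k t) ∨
      ∃ t, t ≠ 0 ∧ ¬ s k t ∧ ¬ s (k+1) t ∧ ¬ s (k-1) t)
    (pr : ∀ k t, t ≠ 0 → s k t → (¬ s k 0 ∧ ¬ s (k+1) t ∧ ¬ s (k-1) t) ∨
      (¬ s k 0 ∧ ∀ u, u ≠ 0 → u ≠ t → ¬ s k u) ∨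
      (¬ s (k+1) t ∧ ¬ s (k+1) 0 ∧ ¬ s (k+2) t) ∨
      (¬ s (k-1) t ∧ ¬ s (k-1) 0 ∧ ¬ s (k-2) t))
    (h : {t | s 0 t}.ncard = 3) :
    {t | s (-1) t}.ncard = 1 ∧ {t | s 1 t}.ncard = 1 := by
  classical
  rw [ncard_fin4] at h ⊢
  rw [ncard_fin4]
  have d1 := d 1
  have d2 := d 2
  have e1 := d (-1)
  have e2 := d (-2)
  have p0 := ph 0
  have b0 := pr 0 1 (by decide)
  have c0 := pr 0 2 (by decide)
  have d0 := pr 0 3 (by decide)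
  have b1 := pr 1 1 (by decide)
  have c1 := pr 1 2 (by decide)
  have d1' := pr 1 3 (by decide)
  have b2 := pr (-1) 1 (by decide)
  have c2 := pr (-1) 2 (by decide)
  have d2' := pr (-1) 3 (by decide)
  clear d ph pr
  simp [Fin.exists_fin_succ, Fin.forall_fin_succ] at d1 d2 e1 e2 p0 b0 c0 d0 b1 c1 d1' b2 c2 d2'
  by_cases x0 : s 0 0 <;> by_cases x1 : s 0 1 <;> by_cases x2 : s 0 2 <;>
    by_cases x3 : s 0 3 <;> simp [x0, x1, x2, x3] at h p0 b0 c0 d0 b1 c1 d1' b2 c2 d2' ⊢ <;>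
    by_cases y0 : s 1 0 <;> by_cases y1 : s 1 1 <;> by_cases y2 : s 1 2 <;>
    by_cases y3 : s 1 3 <;> simp only [y0, y1, y2, y3] at * <;> grind

/-- If `n ≥ 4`, `S` is a minimal dominating set of the flower snark `J_n`, and
some copy `J^i` has weight 3 in `S`, then both adjacent copies `J^{i-1}` and
`J^{i+1}` (indices mod `n`) have weight 1 in `S`. -/
theorem flowerSnark_minimalDominating_weight3 (n : ℕ) (hn : 4 ≤ n)
    (S : Set (FV n)) (hS : MinimalDominating n S)
    (i : Fin n) (h3 : copyWeight S (i : ℕ) = 3) :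
    copyWeight S ((i : ℕ) + n - 1) = 1 ∧ copyWeight S ((i : ℕ) + 1) = 1 := by
  haveI : NeZero n := ⟨by omega⟩
  have hi := i.2
  rw [weight_eq n S i 0 i (by rw [ln_zero, Nat.mod_eq_of_lt hi])] at h3
  have hp : ((ln n i 1 0).1 : ℕ) = ((i : ℕ) + 1) % n := by
    have : ln n i 1 0 = nxt n (i, 0) := by
      rw [← ln_zero, ln_succ]; rfl
    rw [this, nxt_fst, Fin.val_add, Fin.val_one']; simp
  have hm : ((ln n i (-1) 0).1 : ℕ) = ((i : ℕ) + n - 1) % n := by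
    have : ln n i (-1) 0 = (nxt n).symm (i, 0) := by
      rw [← ln_zero, ln_pred]; rfl
    rw [this, symm_fst, Fin.val_sub, Fin.val_one', Nat.mod_eq_of_lt (a := 1) (by omega)]
    congr 1
    simp only
    omega
  rw [weight_eq n S i (-1) _ hm, weight_eq n S i 1 _ hp]
  exact comb (fun k t => ln n i k t ∈ S) (dom_hub n hn S hS i) (priv_hub n hn S hS i)
    (priv_rim n hn S hS i) h3
end

section
/- Let n ≥ 3 and let S be a 2-dominating set of the flower snark J_n. If a copy J^i has weight 1 in S, then a^i ∈ S. -/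
/-- If `n ≥ 3`, `S` is a 2-dominating set of the flower snark `J_n`, and a copy
`J^i` has weight 1 in `S`, then `a^i ∈ S`. -/
theorem flowerSnark_twoDominating_weight1 (n : ℕ) (hn : 3 ≤ n)
    (S : Set (FV n)) (hS : TwoDominating n S)
    (i : Fin n) (h1 : copyWeight S (i : ℕ) = 1) :
    (i, (0 : Fin 4)) ∈ S := by
  by_contra h0
  obtain ⟨w₁, m₁, w₂, m₂, hne, a₁, a₂⟩ := hS _ h0
  have key : ∀ w : FV n, (flowerSnark n).Adj (i, (0 : Fin 4)) w → w.1 = i := by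
    intro w hw
    simp only [flowerSnark, SimpleGraph.fromRel_adj] at hw
    obtain ⟨_, h | h⟩ := hw
    · simp at h
      exact h.1.symm
    · simp at h
  have hmod : (i : ℕ) % n = i := Nat.mod_eq_of_lt i.2
  unfold copyWeight at h1
  obtain ⟨x, hx⟩ := Set.ncard_eq_one.mp h1
  have e : ∀ w ∈ S, (flowerSnark n).Adj (i, (0 : Fin 4)) w → w = x := by
    intro w hw ha
    have : w ∈ S ∩ {v : FV n | (v.1 : ℕ) = (i : ℕ) % n} := by
      refine ⟨hw, ?_⟩
      show (w.1 : ℕ) = (i : ℕ) % n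
      rw [hmod, key w ha]
    rw [hx] at this
    exact this
  exact hne ((e w₁ m₁ a₁).trans (e w₂ m₂ a₂).symm)
end

section
/- Let n ≥ 3 and let S be a 2-dominating set of the flower snark J_n. Then every copy J^i that has weight 1 in S has a neighbouring copy (J^{i−1} or J^{i+1}, indices mod n) whose weight in S is 3 or 4. -/
open Classical in
theorem cw_eq {n : ℕ} (S : Set (FV n)) (m : ℕ) (j : Fin n) (hj : m % n = j) :
    copyWeight S m = (if (j, 0) ∈ S then 1 else 0) + (if (j, 1) ∈ S then 1 else 0)
      + (if (j, 2) ∈ S then 1 else 0) + (if (j, 3) ∈ S then 1 else 0) := by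
  have h : S ∩ {v : FV n | (v.1 : ℕ) = m % n} =
      (fun k : Fin 4 => ((j, k) : FV n)) '' {k | (j, k) ∈ S} := by
    ext ⟨x, k⟩
    simp only [Set.mem_inter_iff, Set.mem_setOf_eq, Set.mem_image, Prod.mk.injEq, hj]
    constructor
    · rintro ⟨h1, h2⟩
      have : x = j := Fin.ext h2
      subst this
      exact ⟨k, h1, rfl, rfl⟩
    · rintro ⟨k', h1, rfl, rfl⟩
      exact ⟨h1, rfl⟩
  unfold copyWeight
  rw [h, Set.ncard_image_of_injective _ (fun a b hab => by simpa using hab)]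
  have h2 : {k : Fin 4 | (j, k) ∈ S} = ((Finset.univ.filter fun k : Fin 4 => (j, k) ∈ S : Finset (Fin 4)) : Set (Fin 4)) := by
    ext k; simp
  rw [h2, Set.ncard_coe_finset, Finset.card_filter, Fin.sum_univ_four]

/-- twist on leaving copy `j` to the right -/
def twi (n : ℕ) (j : Fin n) : Fin 4 → Fin 4 :=
  if (j : ℕ) = n - 1 then ![0, 1, 3, 2] else ![0, 1, 2, 3]

theorem adj_cases {n : ℕ} (hn : 3 ≤ n) (p j q : Fin n) (hp : ((p : ℕ) + 1) % n = j)
    (hq : ((j : ℕ) + 1) % n = q) (k : Fin 4) (hk : k ≠ 0) (w : FV n)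
    (h : (flowerSnark n).Adj (j, k) w) :
    w = (j, 0) ∨ w = (q, twi n j k) ∨ w = (p, twi n p k) := by
  obtain ⟨x, l⟩ := w
  have := p.2
  have := j.2
  have := x.2
  have := q.2
  have hp' : ((p : ℕ) + 1 = n ∧ (j : ℕ) = 0) ∨ ((p : ℕ) + 1 = j) := by
    rcases Nat.lt_or_ge ((p : ℕ) + 1) n with h | h
    · right; rw [← hp, Nat.mod_eq_of_lt h]
    · left; have e : (p : ℕ) + 1 = n := by omega
      rw [e, Nat.mod_self] at hp; omega
  have hq' : ((j : ℕ) + 1 = n ∧ (q : ℕ) = 0) ∨ ((j : ℕ) + 1 = q) := by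
    rcases Nat.lt_or_ge ((j : ℕ) + 1) n with h | h
    · right; rw [← hq, Nat.mod_eq_of_lt h]
    · left; have e : (j : ℕ) + 1 = n := by omega
      rw [e, Nat.mod_self] at hq; omega
  have hx : ((x : ℕ) + 1) % n = j → x = p := by
    intro hx
    apply Fin.ext
    rcases Nat.lt_or_ge ((x : ℕ) + 1) n with h | h
    · rw [Nat.mod_eq_of_lt h] at hx; omega
    · have e : (x : ℕ) + 1 = n := by omega
      rw [e, Nat.mod_self] at hx; omega
  simp only [flowerSnark, SimpleGraph.fromRel_adj] at h
  obtain ⟨-, h⟩ := h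
  simp only [Prod.mk.injEq, twi]
  rcases h with (h | h | h | h | h | h) | (h | h | h | h | h | h)
  · exact absurd h.2.1 hk
  · obtain ⟨h1, rfl, rfl⟩ := h
    right; left
    exact ⟨Fin.ext (by omega), by split_ifs <;> rfl⟩
  · obtain ⟨h1, rfl, rfl⟩ := h
    right; left
    refine ⟨Fin.ext (by omega), ?_⟩
    rw [if_neg (by omega)]; rfl
  · obtain ⟨h1, rfl, rfl⟩ := h
    right; left
    refine ⟨Fin.ext (by omega), ?_⟩
    rw [if_neg (by omega)]; rfl
  · obtain ⟨h1, h2, rfl, rfl⟩ := h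
    right; left
    refine ⟨Fin.ext (by omega), ?_⟩
    rw [if_pos (by omega)]; rfl
  · obtain ⟨h1, h2, rfl, rfl⟩ := h
    right; left
    refine ⟨Fin.ext (by omega), ?_⟩
    rw [if_pos (by omega)]; rfl
  · exact Or.inl ⟨h.1, h.2.1⟩
  · obtain ⟨h1, rfl, rfl⟩ := h
    right; right
    exact ⟨hx h1, by split_ifs <;> rfl⟩
  · obtain ⟨h1, rfl, rfl⟩ := h
    right; right
    refine ⟨Fin.ext (by omega), ?_⟩
    rw [if_neg (by omega)]; rfl
  · obtain ⟨h1, rfl, rfl⟩ := h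
    right; right
    refine ⟨Fin.ext (by omega), ?_⟩
    rw [if_neg (by omega)]; rfl
  · obtain ⟨h1, h2, rfl, rfl⟩ := h
    right; right
    refine ⟨Fin.ext (by omega), ?_⟩
    rw [if_pos (by omega)]; rfl
  · obtain ⟨h1, h2, rfl, rfl⟩ := h
    right; right
    refine ⟨Fin.ext (by omega), ?_⟩
    rw [if_pos (by omega)]; rfl

theorem adj_zero {n : ℕ} (j : Fin n) (w : FV n)
    (h : (flowerSnark n).Adj (j, 0) w) :
    w = (j, 1) ∨ w = (j, 2) ∨ w = (j, 3) := by
  obtain ⟨x, l⟩ := w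
  simp only [flowerSnark, SimpleGraph.fromRel_adj] at h
  simp only [Prod.mk.injEq]
  fin_cases l <;> simp_all

theorem two_of {n : ℕ} {S : Set (FV n)} (hS : TwoDominating n S) (v x y z : FV n)
    (hv : ∀ w, (flowerSnark n).Adj v w → w = x ∨ w = y ∨ w = z) :
    v ∈ S ∨ (x ∈ S ∧ y ∈ S) ∨ (x ∈ S ∧ z ∈ S) ∨ (y ∈ S ∧ z ∈ S) := by
  by_cases h : v ∈ S
  · exact Or.inl h
  obtain ⟨w₁, m1, w₂, m2, hne, a1, a2⟩ := hS v h
  rcases hv _ a1 with rfl | rfl | rfl <;> rcases hv _ a2 with rfl | rfl | rfl <;> simp_all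

/-- If `n ≥ 3` and `S` is a 2-dominating set of the flower snark `J_n`, then
every copy of weight 1 in `S` has a neighbouring copy (indices mod `n`) whose
weight in `S` is 3 or 4. -/
theorem flowerSnark_twoDominating_weight1_neighbour (n : ℕ) (hn : 3 ≤ n)
    (S : Set (FV n)) (hS : TwoDominating n S)
    (i : Fin n) (h1 : copyWeight S (i : ℕ) = 1) :
    (copyWeight S ((i : ℕ) + n - 1) = 3 ∨ copyWeight S ((i : ℕ) + n - 1) = 4) ∨
    (copyWeight S ((i : ℕ) + 1) = 3 ∨ copyWeight S ((i : ℕ) + 1) = 4) := by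
  classical
  have hpos : 0 < n := by omega
  let N : Fin n → Fin n := fun j => ⟨((j : ℕ) + 1) % n, Nat.mod_lt _ hpos⟩
  let P : Fin n → Fin n := fun j => ⟨((j : ℕ) + n - 1) % n, Nat.mod_lt _ hpos⟩
  have hNP : ∀ j : Fin n, ((P j : ℕ) + 1) % n = j := by
    intro j
    have := j.2
    change (((j : ℕ) + n - 1) % n + 1) % n = j
    rw [Nat.mod_add_mod, show (j : ℕ) + n - 1 + 1 = j + n by omega, Nat.add_mod_right,
      Nat.mod_eq_of_lt this]
  have hN : ∀ j : Fin n, ((j : ℕ) + 1) % n = N j := fun j => rfl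
  have K := fun (p j q : Fin n) hp hq (k : Fin 4) (hk : k ≠ 0) =>
    two_of hS (j, k) _ _ _ (adj_cases hn p j q hp hq k hk)
  have Z := fun j : Fin n => two_of hS (j, 0) _ _ _ (adj_zero j)
  have tI := fun k hk => K (P i) i (N i) (hNP i) (hN i) k hk
  have tL := fun k hk => K (P (P i)) (P i) i (hNP (P i)) (hNP i) k hk
  have tR := fun k hk => K i (N i) (N (N i)) (hN i) (hN (N i)) k hk
  have zI := Z i
  clear Z K
  rw [cw_eq S _ i (Nat.mod_eq_of_lt i.2)] at h1
  rw [cw_eq S _ (P i) rfl, cw_eq S _ (N i) rfl]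
  generalize P (P i) = pp at *
  generalize N (N i) = nn at *
  generalize P i = p at *
  generalize N i = q at *
  have i0 : (i, 0) ∈ S ∧ (i, 1) ∉ S ∧ (i, 2) ∉ S ∧ (i, 3) ∉ S := by
    clear tI tL tR
    by_cases a : (i, 0) ∈ S <;> by_cases b : (i, 1) ∈ S <;> by_cases c : (i, 2) ∈ S <;>
      by_cases d : (i, 3) ∈ S <;> simp_all
  obtain ⟨a0, b0, c0, d0⟩ := i0
  have i1 := tI 1 (by decide)
  have i2 := tI 2 (by decide)
  have i3 := tI 3 (by decide)
  have l1 := tL 1 (by decide)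
  have l2 := tL 2 (by decide)
  have l3 := tL 3 (by decide)
  have r1 := tR 1 (by decide)
  have r2 := tR 2 (by decide)
  have r3 := tR 3 (by decide)
  clear tI tL tR zI h1 hS
  have ti : ∀ j : Fin n, (twi n j 1 = 1 ∧ twi n j 2 = 3 ∧ twi n j 3 = 2) ∨
      (twi n j 1 = 1 ∧ twi n j 2 = 2 ∧ twi n j 3 = 3) := by
    intro j
    unfold twi
    split_ifs
    · left; exact ⟨rfl, rfl, rfl⟩
    · right; exact ⟨rfl, rfl, rfl⟩
  have wt : ∀ j : Fin n, ((j, 0) ∉ S → ((j, 1) ∈ S ∨ (j, 2) ∉ S ∨ (j, 3) ∉ S) ∧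
      ((j, 2) ∈ S ∨ (j, 1) ∉ S ∨ (j, 3) ∉ S) ∧ ((j, 3) ∈ S ∨ (j, 1) ∉ S ∨ (j, 2) ∉ S)) →
      ((((if (j, 0) ∈ S then 1 else 0) + (if (j, 1) ∈ S then 1 else 0)
      + (if (j, 2) ∈ S then 1 else 0) + (if (j, 3) ∈ S then 1 else 0) = 3) ∨
      ((if (j, 0) ∈ S then 1 else 0) + (if (j, 1) ∈ S then 1 else 0)
      + (if (j, 2) ∈ S then 1 else 0) + (if (j, 3) ∈ S then 1 else 0) = 4)) ∨
      ((j, 1) ∉ S ∧ (j, 2) ∉ S) ∨ ((j, 1) ∉ S ∧ (j, 3) ∉ S) ∨ ((j, 2) ∉ S ∧ (j, 3) ∉ S)) := by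
    intro j
    by_cases a : (j, 0) ∈ S <;> by_cases b : (j, 1) ∈ S <;> by_cases c : (j, 2) ∈ S <;>
      by_cases d : (j, 3) ∈ S <;> simp [a, b, c, d]
  have wL := wt p (by
    rcases ti p with ⟨e1, e2, e3⟩ | ⟨e1, e2, e3⟩ <;> rw [e1] at l1 <;> rw [e2] at l2 <;>
      rw [e3] at l3 <;> clear i1 i2 i3 r1 r2 r3 wt ti <;> tauto)
  have wR := wt q (by
    rcases ti i with ⟨e1, e2, e3⟩ | ⟨e1, e2, e3⟩ <;> rw [e1] at r1 <;> rw [e2] at r2 <;>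
      rw [e3] at r3 <;> clear i1 i2 i3 l1 l2 l3 wt ti wL <;> tauto)
  rcases wL with h | wL
  · exact Or.inl h
  rcases wR with h | wR
  · exact Or.inr h
  exfalso
  clear l1 l2 l3 r1 r2 r3 wt
  rcases ti p with ⟨e1, e2, e3⟩ | ⟨e1, e2, e3⟩ <;> rw [e1] at i1 <;> rw [e2] at i2 <;>
    rw [e3] at i3 <;> rcases ti i with ⟨f1, f2, f3⟩ | ⟨f1, f2, f3⟩ <;> rw [f1] at i1 <;>
    rw [f2] at i2 <;> rw [f3] at i3 <;> clear ti <;> grind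
end

section
/- Let n ≥ 3 and let S be a total dominating set of the flower snark J_n. Then there is no index i such that the copies J^i, J^{i+1}, J^{i+2} have weights 1, 1, 1 in S; there is no index i such that J^i, J^{i+1}, J^{i+2}, J^{i+3} have weights 1, 1, 2, 1 (or, read in reverse, 1, 2, 1, 1) in S; and there is no index i such that J^i, …, J^{i+4} have weights 1, 2, 1, 2, 1 in S (all indices mod n). -/
open Classical in
/-- Indicator of membership of the vertex `t` of copy `j`. -/
noncomputable def fsInd {n : ℕ} (S : Set (FV n)) (j : Fin n) (t : Fin 4) : ℕ :=
  if (j, t) ∈ S then 1 else 0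

lemma fs_ind_eq {n : ℕ} {S : Set (FV n)} {j : Fin n} {t : Fin 4} (h : (j, t) ∈ S) :
    fsInd S j t = 1 := by simp [fsInd, h]

lemma fs_copyWeight {n : ℕ} (S : Set (FV n)) (m : ℕ) (j : Fin n) (hj : (j : ℕ) = m % n) :
    copyWeight S m = fsInd S j 0 + (fsInd S j 1 + fsInd S j 2 + fsInd S j 3) := by
  classical
  have h : S ∩ {v : FV n | (v.1 : ℕ) = m % n} =
      (((Finset.univ.filter (fun t : Fin 4 => (j, t) ∈ S)).image (fun t => (j, t)) :
        Finset (FV n)) : Set (FV n)) := by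
    ext ⟨x, t⟩
    simp only [Set.mem_inter_iff, Set.mem_setOf_eq, Finset.coe_image, Finset.coe_filter,
      Finset.mem_univ, true_and, Set.mem_image, Prod.mk.injEq]
    constructor
    · rintro ⟨h1, h2⟩
      have : x = j := Fin.ext (by omega)
      subst this
      exact ⟨t, h1, rfl, rfl⟩
    · rintro ⟨t', h1, rfl, rfl⟩
      exact ⟨h1, hj⟩
  unfold copyWeight
  rw [h, Set.ncard_coe_finset, Finset.card_image_of_injective _ (fun a b h => by simpa using h),
    Finset.card_filter, Fin.sum_univ_four]
  simp only [fsInd]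
  omega

lemma fs_B {n : ℕ} {S : Set (FV n)} (hS : TotalDominating n S) (j : Fin n) :
    1 ≤ fsInd S j 1 + fsInd S j 2 + fsInd S j 3 := by
  obtain ⟨⟨x, t⟩, hw, hadj⟩ := hS (j, 0)
  have : x = j ∧ t ≠ 0 := by
    simp [flowerSnark] at hadj
    grind
  obtain ⟨rfl, ht⟩ := this
  have := fs_ind_eq hw
  fin_cases t <;> simp_all <;> omega

lemma fs_nb {n : ℕ} (hn : 3 ≤ n) {S : Set (FV n)} (hS : TotalDominating n S) (p c q : Fin n)
    (hc : (c : ℕ) = if (p : ℕ) + 1 = n then (0 : ℕ) else (p : ℕ) + 1)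
    (hq : (q : ℕ) = if (c : ℕ) + 1 = n then (0 : ℕ) else (c : ℕ) + 1) (h0 : (c, 0) ∉ S) :
    ((p, 1) ∈ S ∨ (q, 1) ∈ S) ∧
    (((p, if (p : ℕ) + 1 = n then 3 else 2) ∈ S) ∨
      ((q, if (c : ℕ) + 1 = n then 3 else 2) ∈ S)) ∧
    (((p, if (p : ℕ) + 1 = n then 2 else 3) ∈ S) ∨
      ((q, if (c : ℕ) + 1 = n then 2 else 3) ∈ S)) := by
  have hmod : ∀ x : Fin n, ((x : ℕ) + 1) % n = if (x : ℕ) + 1 = n then (0 : ℕ) else (x : ℕ) + 1 := by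
    intro x
    split_ifs with h
    · rw [h, Nat.mod_self]
    · exact Nat.mod_eq_of_lt (by omega)
  have hp := p.2
  have hc' := c.2
  have hq' := q.2
  refine ⟨?_, ?_, ?_⟩
  · obtain ⟨⟨x, t⟩, hw, hadj⟩ := hS (c, 1)
    have hx := x.2
    simp [flowerSnark, hmod] at hadj
    have : (x = c ∧ t = 0) ∨ (x = p ∧ t = 1) ∨ (x = q ∧ t = 1) := by
      simp only [Fin.ext_iff (n := n)] at *
      grind
    rcases this with ⟨rfl, rfl⟩ | ⟨rfl, rfl⟩ | ⟨rfl, rfl⟩ <;> tauto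
  · obtain ⟨⟨x, t⟩, hw, hadj⟩ := hS (c, 2)
    have hx := x.2
    simp [flowerSnark, hmod] at hadj
    have : (x = c ∧ t = 0) ∨ (x = p ∧ t = if (p : ℕ) + 1 = n then 3 else 2) ∨
        (x = q ∧ t = if (c : ℕ) + 1 = n then 3 else 2) := by
      simp only [Fin.ext_iff (n := n)] at *
      grind
    rcases this with ⟨rfl, rfl⟩ | ⟨rfl, rfl⟩ | ⟨rfl, rfl⟩ <;> tauto
  · obtain ⟨⟨x, t⟩, hw, hadj⟩ := hS (c, 3)
    have hx := x.2
    simp [flowerSnark, hmod] at hadj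
    have : (x = c ∧ t = 0) ∨ (x = p ∧ t = if (p : ℕ) + 1 = n then 2 else 3) ∨
        (x = q ∧ t = if (c : ℕ) + 1 = n then 2 else 3) := by
      simp only [Fin.ext_iff (n := n)] at *
      grind
    rcases this with ⟨rfl, rfl⟩ | ⟨rfl, rfl⟩ | ⟨rfl, rfl⟩ <;> tauto

lemma fs_A {n : ℕ} (hn : 3 ≤ n) {S : Set (FV n)} (hS : TotalDominating n S) (p c q : Fin n)
    (hc : (c : ℕ) = if (p : ℕ) + 1 = n then (0 : ℕ) else (p : ℕ) + 1)
    (hq : (q : ℕ) = if (c : ℕ) + 1 = n then (0 : ℕ) else (c : ℕ) + 1) (h0 : fsInd S c 0 = 0) :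
    3 ≤ (fsInd S p 1 + fsInd S p 2 + fsInd S p 3) +
      (fsInd S q 1 + fsInd S q 2 + fsInd S q 3) := by
  have h0' : (c, 0) ∉ S := by
    intro h
    rw [fs_ind_eq h] at h0
    omega
  obtain ⟨h1, h2, h3⟩ := fs_nb hn hS p c q hc hq h0'
  have e1 : 1 ≤ fsInd S p 1 + fsInd S q 1 := by
    rcases h1 with h | h <;> have := fs_ind_eq h <;> omega
  split_ifs at h2 h3 <;>
  · rcases h2 with h | h <;> rcases h3 with h' | h' <;> have := fs_ind_eq h <;>
      have := fs_ind_eq h' <;> omega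

/-- Abstract counting: each copy splits as `[a ∈ S]` plus the rest. -/
lemma fs_main (n : ℕ) (hn : 3 ≤ n) (S : Set (FV n)) (hS : TotalDominating n S) :
    ∃ A W : ℕ → ℕ, ∀ m, copyWeight S m = A m + W m ∧ 1 ≤ W m ∧
      (A (m + 1) = 0 → 3 ≤ W m + W (m + 2)) := by
  let J : ℕ → Fin n := fun m => ⟨m % n, Nat.mod_lt _ (by omega)⟩
  have hJ : ∀ m, (J (m + 1) : ℕ) = if (J m : ℕ) + 1 = n then 0 else (J m : ℕ) + 1 := by
    intro m
    simp only [J]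
    have := Nat.mod_lt m (show 0 < n by omega)
    rw [← Nat.mod_add_mod]
    split_ifs with h
    · rw [h, Nat.mod_self]
    · exact Nat.mod_eq_of_lt (by omega)
  refine ⟨fun m => fsInd S (J m) 0,
    fun m => fsInd S (J m) 1 + fsInd S (J m) 2 + fsInd S (J m) 3, fun m => ⟨?_, ?_, ?_⟩⟩
  · exact fs_copyWeight S m (J m) rfl
  · exact fs_B hS (J m)
  · exact fs_A hn hS (J m) (J (m + 1)) (J (m + 2)) (hJ m) (hJ (m + 1))

/-- If `n ≥ 3` and `S` is a total dominating set of the flower snark `J_n`,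
then `S` contains none of the patterns 111, 1121 (equivalently 1211 read in
reverse), or 12121 of weights on consecutive copies (indices mod `n`). -/
theorem flowerSnark_totalDominating_patterns (n : ℕ) (hn : 3 ≤ n)
    (S : Set (FV n)) (hS : TotalDominating n S) :
    (¬ ∃ i : Fin n, copyWeight S (i : ℕ) = 1 ∧ copyWeight S ((i : ℕ) + 1) = 1 ∧
        copyWeight S ((i : ℕ) + 2) = 1) ∧
    (¬ ∃ i : Fin n, copyWeight S (i : ℕ) = 1 ∧ copyWeight S ((i : ℕ) + 1) = 1 ∧
        copyWeight S ((i : ℕ) + 2) = 2 ∧ copyWeight S ((i : ℕ) + 3) = 1) ∧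
    (¬ ∃ i : Fin n, copyWeight S (i : ℕ) = 1 ∧ copyWeight S ((i : ℕ) + 1) = 2 ∧
        copyWeight S ((i : ℕ) + 2) = 1 ∧ copyWeight S ((i : ℕ) + 3) = 1) ∧
    (¬ ∃ i : Fin n, copyWeight S (i : ℕ) = 1 ∧ copyWeight S ((i : ℕ) + 1) = 2 ∧
        copyWeight S ((i : ℕ) + 2) = 1 ∧ copyWeight S ((i : ℕ) + 3) = 2 ∧
        copyWeight S ((i : ℕ) + 4) = 1) := by
  obtain ⟨A, W, h⟩ := fs_main n hn S hS
  refine ⟨?_, ?_, ?_, ?_⟩ <;> rintro ⟨i, hi⟩ <;>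
  · have h0 := h i
    have h1 := h (i + 1)
    have h2 := h (i + 2)
    have h3 := h (i + 3)
    have h4 := h (i + 4)
    simp only [add_assoc, Nat.reduceAdd] at h0 h1 h2 h3 h4
    omega
end

section
/- Let n ≥ 4 and let S be a connected dominating set of the flower snark J_n. Suppose there is a copy J^i such that either a^i ∉ S or J^i has weight 2 in S. Then the flower snark J_{n−1} has a connected dominating set of cardinality |S| − |S ∩ {a^i, b^i, c^i, d^i}|. -/
namespace FSAux

lemma conn_induct {V : Type*} {G : SimpleGraph V} {S : Set V} (h : (G.induce S).Connected)
    (P : V → Prop) (s0 : V) (h0 : s0 ∈ S) (hP0 : P s0)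
    (hstep : ∀ s ∈ S, ∀ t ∈ S, G.Adj s t → P s → P t) : ∀ s ∈ S, P s := by
  intro s hs
  obtain ⟨w⟩ := h.preconnected ⟨s0, h0⟩ ⟨s, hs⟩
  have key : ∀ (u v : S), (G.induce S).Walk u v → P u → P v := by
    intro u v w
    induction w with
    | nil => exact id
    | cons hadj _ ih =>
      intro hu
      exact ih (hstep _ (Subtype.property _) _ (Subtype.property _) hadj hu)
  exact key _ _ w hP0

/-- One directed arc relation, with natural number indices and no remainder. -/
def arc (n a b : ℕ) (x y : Fin 4) : Prop :=
  (a = b ∧ x = 0 ∧ y ≠ 0) ∨ (a + 1 = b ∧ x = y ∧ x ≠ 0) ∨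
  (a + 1 = n ∧ b = 0 ∧ ((x = 1 ∧ y = 1) ∨ (x = 2 ∧ y = 3) ∨ (x = 3 ∧ y = 2)))

lemma adj_iff {n : ℕ} (hn : 2 ≤ n) (v w : FV n) : (flowerSnark n).Adj v w ↔
    arc n v.1 w.1 v.2 w.2 ∨ arc n w.1 v.1 w.2 v.2 := by
  obtain ⟨⟨a, ha⟩, x⟩ := v
  obtain ⟨⟨b, hb⟩, y⟩ := w
  have hmod : ∀ c d : ℕ, c < n → d < n → ((c + 1) % n = d ↔ (c + 1 = d ∨ (c + 1 = n ∧ d = 0))) := by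
    intro c d hc hd
    by_cases h : c + 1 = n
    · simp [h]; omega
    · rw [Nat.mod_eq_of_lt (by omega)]; omega
  simp only [flowerSnark, SimpleGraph.fromRel_adj, arc, hmod a b ha hb, hmod b a hb ha,
    ne_eq, Prod.mk.injEq, Fin.mk.injEq]
  fin_cases x <;> fin_cases y <;> simp <;> omega

/-- twist -/
def tw : Fin 4 → Fin 4 := ![0, 1, 3, 2]

/-- embedding -/
def e {m : ℕ} (i : Fin (m + 1)) (v : FV m) : FV (m + 1) := (i.succAbove v.1, v.2)

/-- predecessor -/
def p {m : ℕ} (hm : 3 ≤ m) (i : Fin (m + 1)) (x : Fin 4) : FV m :=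
  if h : (i : ℕ) = 0 then (⟨m - 1, by omega⟩, tw x) else (⟨i - 1, by omega⟩, x)

/-- successor -/
def q {m : ℕ} (hm : 3 ≤ m) (i : Fin (m + 1)) (x : Fin 4) : FV m :=
  if h : (i : ℕ) = m then (⟨0, by omega⟩, tw x) else (⟨i, by omega⟩, x)

lemma sa_val {m : ℕ} (i : Fin (m + 1)) (j : Fin m) :
    ((i.succAbove j : Fin (m + 1)) : ℕ) = if (j : ℕ) < i then (j : ℕ) else j + 1 := by
  simp only [Fin.succAbove, Fin.lt_def, Fin.val_castSucc]
  split_ifs <;> simp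

lemma adj_e {m : ℕ} (hm : 3 ≤ m) (i : Fin (m + 1)) (u v : FV m)
    (h : (flowerSnark (m + 1)).Adj (e i u) (e i v)) : (flowerSnark m).Adj u v := by
  rw [adj_iff (by omega)] at h ⊢
  obtain ⟨⟨a, ha⟩, x⟩ := u
  obtain ⟨⟨b, hb⟩, y⟩ := v
  obtain ⟨i, hi⟩ := i
  have h1 := sa_val ⟨i, hi⟩ ⟨a, ha⟩
  have h2 := sa_val ⟨i, hi⟩ ⟨b, hb⟩
  simp only [e, arc] at h h1 h2 ⊢
  generalize ((Fin.succAbove ⟨i, hi⟩ ⟨a, ha⟩ : Fin (m + 1)) : ℕ) = A at *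
  generalize ((Fin.succAbove ⟨i, hi⟩ ⟨b, hb⟩ : Fin (m + 1)) : ℕ) = B at *
  fin_cases x <;> fin_cases y <;> simp at h ⊢ <;> split_ifs at h1 h2 <;> omega

lemma adj_ie {m : ℕ} (hm : 3 ≤ m) (i : Fin (m + 1)) (x : Fin 4) (v : FV m)
    (h : (flowerSnark (m + 1)).Adj (i, x) (e i v)) : x ≠ 0 ∧ (v = p hm i x ∨ v = q hm i x) := by
  rw [adj_iff (by omega)] at h
  obtain ⟨⟨b, hb⟩, y⟩ := v
  obtain ⟨i, hi⟩ := i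
  have h2 := sa_val ⟨i, hi⟩ ⟨b, hb⟩
  simp only [e, arc, p, q] at h h2 ⊢
  generalize ((Fin.succAbove ⟨i, hi⟩ ⟨b, hb⟩ : Fin (m + 1)) : ℕ) = B at *
  fin_cases x <;> fin_cases y <;> simp [tw] at h ⊢ <;> split_ifs at h2 ⊢ <;>
    (try simp only [Prod.mk.injEq, Fin.mk.injEq, Fin.reduceEq, and_true, and_false]) <;> omega

lemma adj_pq {m : ℕ} (hm : 3 ≤ m) (i : Fin (m + 1)) (x : Fin 4) (hx : x ≠ 0) :
    (flowerSnark m).Adj (p hm i x) (q hm i x) := by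
  rw [adj_iff (by omega)]
  obtain ⟨i, hi⟩ := i
  simp only [arc, p, q] at *
  fin_cases x <;> simp [tw] at hx ⊢ <;> split_ifs <;> simp <;> omega

lemma adj_ii {m : ℕ} (hm : 3 ≤ m) (i : Fin (m + 1)) (x y : Fin 4)
    (h : (flowerSnark (m + 1)).Adj (i, x) (i, y)) : (x = 0 ∧ y ≠ 0) ∨ (x ≠ 0 ∧ y = 0) := by
  rw [adj_iff (by omega)] at h
  obtain ⟨i, hi⟩ := i
  simp only [arc] at *
  fin_cases x <;> fin_cases y <;> simp at h ⊢ <;> omega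

lemma cases_v {m : ℕ} (i : Fin (m + 1)) (v : FV (m + 1)) :
    (∃ x, v = (i, x)) ∨ ∃ u, v = e i u := by
  obtain ⟨j, x⟩ := v
  by_cases h : j = i
  · exact Or.inl ⟨x, by rw [h]⟩
  · obtain ⟨k, hk⟩ := Fin.exists_succAbove_eq h
    exact Or.inr ⟨(k, x), by simp [e, hk]⟩

lemma e_inj {m : ℕ} (i : Fin (m + 1)) : Function.Injective (e i) := by
  rintro ⟨a, x⟩ ⟨b, y⟩ h
  simpa [e] using h

lemma e_ne {m : ℕ} (i : Fin (m + 1)) (u : FV m) : (e i u).1 ≠ i := Fin.succAbove_ne _ _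

lemma not_sub {m : ℕ} (hm : 3 ≤ m) (i : Fin (m + 1)) (S : Set (FV (m + 1)))
    (hS : Dominating (m + 1) S) : ∃ u, e i u ∈ S := by
  by_contra! hc
  obtain ⟨w, hw, ha⟩ := hS (e i (⟨0, by omega⟩, 0)) (hc _)
  rcases cases_v i w with ⟨x, rfl⟩ | ⟨u, rfl⟩
  · have h := (adj_ie hm i x _ ha.symm)
    rw [adj_iff (by omega)] at ha
    obtain ⟨i, hi⟩ := i
    simp only [e, arc, sa_val] at ha
    fin_cases x <;> simp at ha h <;> split_ifs at ha <;> omega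
  · exact hc _ hw

lemma main {m : ℕ} (hm : 3 ≤ m) (i : Fin (m + 1)) (S : Set (FV (m + 1)))
    (hS : ConnectedDominating (m + 1) S)
    (hu : (i, (0 : Fin 4)) ∈ S → ∀ x y, x ≠ 0 → y ≠ 0 → (i, x) ∈ S → (i, y) ∈ S → x = y) :
    ConnectedDominating m (e i ⁻¹' S) := by
  obtain ⟨hD, hC⟩ := hS
  have L : ∀ x, x ≠ 0 → (i, x) ∈ S → e i (p hm i x) ∈ S ∨ e i (q hm i x) ∈ S := by
    intro x hx hxS
    by_contra! hc
    have := conn_induct hC (fun v => v = (i, x) ∨ v = (i, 0)) (i, x) hxS (Or.inl rfl) (by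
      rintro s hs t ht hadj hP
      rcases cases_v i t with ⟨y, rfl⟩ | ⟨u, rfl⟩
      · by_cases hy : y = 0
        · right; rw [hy]
        · rcases hP with rfl | rfl
          · rcases adj_ii hm i _ _ hadj with h | h
            · exact absurd h.1 hx
            · exact absurd h.2 hy
          · left; rw [hu hs x y hx hy hxS ht]
      · exfalso
        rcases hP with rfl | rfl
        · rcases (adj_ie hm i _ _ hadj).2 with rfl | rfl
          · exact hc.1 ht
          · exact hc.2 ht
        · exact (adj_ie hm i _ _ hadj).1 rfl)
    obtain ⟨u, hu'⟩ := not_sub hm i S hD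
    rcases this _ hu' with h | h <;> exact e_ne i u (by rw [h])
  refine ⟨?_, ?_⟩
  · intro v hv
    obtain ⟨w, hw, ha⟩ := hD (e i v) hv
    rcases cases_v i w with ⟨x, rfl⟩ | ⟨u, rfl⟩
    · obtain ⟨hx, h⟩ := adj_ie hm i x v ha.symm
      have hpq := adj_pq hm i x hx
      rcases h with rfl | rfl
      · exact ⟨_, (L x hx hw).resolve_left hv, hpq⟩
      · exact ⟨_, (L x hx hw).resolve_right hv, hpq.symm⟩
    · exact ⟨u, hw, adj_e hm i _ _ ha⟩
  · obtain ⟨t0, ht0⟩ := not_sub hm i S hD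
    set R : FV m → Prop := fun t => ∀ h : t ∈ e i ⁻¹' S,
      ((flowerSnark m).induce (e i ⁻¹' S)).Reachable ⟨t0, ht0⟩ ⟨t, h⟩ with hR
    have Rstep : ∀ a b, e i a ∈ S → (flowerSnark m).Adj a b → R a → R b := by
      intro a b ha hab hRa hb
      refine (hRa ha).trans (SimpleGraph.Adj.reachable ?_)
      exact hab
    have key := conn_induct hC (fun s => (∀ t, s = e i t → R t) ∧
        (∀ x, x ≠ 0 → s = (i, x) → R (p hm i x) ∧ R (q hm i x)) ∧
        (s = (i, 0) → ∀ x, x ≠ 0 → (i, x) ∈ S → R (p hm i x) ∧ R (q hm i x)))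
      (e i t0) ht0 ⟨by
        intro t h
        have := e_inj i h
        subst this
        intro _
        exact SimpleGraph.Reachable.refl _, fun x _ h => absurd (by rw [h]) (e_ne i t0),
        fun h => absurd (by rw [h]) (e_ne i t0)⟩ (by
      rintro s hs t ht hadj ⟨h1, h2, h3⟩
      refine ⟨?_, ?_, ?_⟩
      · rintro t rfl
        rcases cases_v i s with ⟨x, rfl⟩ | ⟨u, rfl⟩
        · obtain ⟨hx, h⟩ := adj_ie hm i x t hadj
          rcases h with rfl | rfl
          · exact (h2 x hx rfl).1
          · exact (h2 x hx rfl).2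
        · exact Rstep u t hs (adj_e hm i _ _ hadj) (h1 u rfl)
      · rintro x hx rfl
        rcases cases_v i s with ⟨y, rfl⟩ | ⟨u, rfl⟩
        · rcases adj_ii hm i _ _ hadj with h | h
          · obtain ⟨rfl, -⟩ := h
            exact h3 rfl x hx ht
          · exact absurd h.2 hx
        · obtain ⟨-, h⟩ := adj_ie hm i x u hadj.symm
          have hpq := adj_pq hm i x hx
          have := h1 u rfl
          rcases h with rfl | rfl
          · exact ⟨this, Rstep _ _ hs hpq this⟩
          · exact ⟨Rstep _ _ hs hpq.symm this, this⟩
      · rintro rfl x hx hxS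
        rcases cases_v i s with ⟨y, rfl⟩ | ⟨u, rfl⟩
        · have hy : y ≠ 0 := by
            rcases adj_ii hm i _ _ hadj with h | h
            · exact absurd rfl h.2
            · exact h.1
          obtain rfl := hu ht x y hx hy hxS hs
          exact h2 x hx rfl
        · exact absurd rfl (adj_ie hm i 0 u hadj.symm).1)
    rw [SimpleGraph.connected_iff_exists_forall_reachable]
    refine ⟨⟨t0, ht0⟩, ?_⟩
    rintro ⟨t, ht⟩
    exact (key (e i t) ht).1 t rfl ht

end FSAux

theorem flowerSnark_connectedDominating_remove (n : ℕ) (hn : 4 ≤ n)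
    (S : Set (FV n)) (hS : ConnectedDominating n S)
    (i : Fin n) (hi : (i, (0 : Fin 4)) ∉ S ∨ copyWeight S (i : ℕ) = 2) :
    ∃ T : Set (FV (n - 1)), ConnectedDominating (n - 1) T ∧
      T.ncard = S.ncard - copyWeight S (i : ℕ) := by
  obtain ⟨m, rfl⟩ : ∃ m, n = m + 1 := ⟨n - 1, by omega⟩
  have hcopy : {v : FV (m + 1) | (v.1 : ℕ) = (i : ℕ) % (m + 1)} = {v | v.1 = i} := by
    ext v
    simp only [Set.mem_ofPred_eq, Nat.mod_eq_of_lt i.2, Fin.ext_iff]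
  unfold copyWeight at hi ⊢
  rw [hcopy] at hi ⊢
  refine ⟨FSAux.e i ⁻¹' S, FSAux.main (by omega) i S hS ?_, ?_⟩
  · intro h0 x y hx hy hxS hyS
    by_contra hxy
    have h2 := hi.resolve_left (not_not.mpr h0)
    have hsub : ({(i, 0), (i, x), (i, y)} : Set (FV (m + 1))) ⊆ S ∩ {v | v.1 = i} := by
      rintro v (rfl | rfl | rfl)
      · exact ⟨h0, rfl⟩
      · exact ⟨hxS, rfl⟩
      · exact ⟨hyS, rfl⟩
    have h3 := Set.ncard_le_ncard hsub (Set.toFinite _)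
    rw [h2, Set.ncard_eq_three.mpr ⟨(i, 0), (i, x), (i, y), by simpa using hx.symm,
      by simpa using hy.symm, by simpa using hxy, rfl⟩] at h3
    omega
  · have h1 : FSAux.e i '' (FSAux.e i ⁻¹' S) = S \ {v | v.1 = i} := by
      ext v
      constructor
      · rintro ⟨u, hu, rfl⟩
        exact ⟨hu, FSAux.e_ne i u⟩
      · rintro ⟨hv, hne⟩
        rcases FSAux.cases_v i v with ⟨x, rfl⟩ | ⟨u, rfl⟩
        · exact absurd rfl hne
        · exact ⟨u, hv, rfl⟩
    have h2 := Set.ncard_inter_add_ncard_sdiff_eq_ncard S {v : FV (m + 1) | v.1 = i}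
      (Set.toFinite _)
    rw [← h1, Set.ncard_image_of_injective _ (FSAux.e_inj i)] at h2
    change (FSAux.e i ⁻¹' S).ncard = _
    omega
end

section
/- Let n ≥ 4 and let S be a connected dominating set of the flower snark J_n. Suppose there is a copy J^i with weight 4 in S (i.e. all of a^i, b^i, c^i, d^i belong to S). Then for every positive integer k ≤ n − 3, the flower snark J_{n−k} has a connected dominating set of cardinality |S| − |S ∩ ({a^{i+1},b^{i+1},c^{i+1},d^{i+1}} ∪ … ∪ {a^{i+k},b^{i+k},c^{i+k},d^{i+k}})| (indices mod n). -/
namespace FSProof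

/-- Numeric form of the adjacency relation. -/
def R (n p : ℕ) (x : Fin 4) (q : ℕ) (y : Fin 4) : Prop :=
  (p = q ∧ x = 0 ∧ y ≠ 0) ∨
  (p + 1 = q ∧ x = y ∧ x ≠ 0) ∨
  (p + 1 = n ∧ q = 0 ∧ x ≠ 0 ∧ y = Equiv.swap 2 3 x)

lemma adj_iff {n : ℕ} (hn : 2 ≤ n) (v w : FV n) :
    (flowerSnark n).Adj v w ↔ R n v.1 v.2 w.1 w.2 ∨ R n w.1 w.2 v.1 v.2 := by
  obtain ⟨⟨p, hp⟩, x⟩ := v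
  obtain ⟨⟨q, hq⟩, y⟩ := w
  have h1 : (p + 1) % n = q ↔ (p + 1 = q ∨ (p + 1 = n ∧ q = 0)) := by
    rcases Nat.lt_or_ge (p + 1) n with h | h
    · rw [Nat.mod_eq_of_lt h]; omega
    · have : p + 1 = n := by omega
      rw [this, Nat.mod_self]; omega
  have h2 : (q + 1) % n = p ↔ (q + 1 = p ∨ (q + 1 = n ∧ p = 0)) := by
    rcases Nat.lt_or_ge (q + 1) n with h | h
    · rw [Nat.mod_eq_of_lt h]; omega
    · have : q + 1 = n := by omega
      rw [this, Nat.mod_self]; omega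
  have e1 : Equiv.swap (2 : Fin 4) 3 1 = 1 := by decide
  have e0 : Equiv.swap (2 : Fin 4) 3 0 = 0 := by decide
  simp only [flowerSnark, SimpleGraph.fromRel_adj, R, h1, h2, ne_eq, Prod.mk.injEq, Fin.mk.injEq]
  fin_cases x <;> fin_cases y <;> simp [e0, e1] <;> omega

/-- Inclusion of the vertices of `J_m` as the copies `s, s+1, …` of `J_n`. -/
def psi {n m : ℕ} (s : ℕ) (hs : s < n) (hm : m ≤ n) (u : FV m) : FV n :=
  if h : s + u.1 < n then (⟨s + u.1, h⟩, u.2)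
  else (⟨s + u.1 - n, by have := u.1.2; omega⟩, Equiv.swap 2 3 u.2)

lemma swap_inj (x y : Fin 4) : Equiv.swap (2 : Fin 4) 3 x = Equiv.swap 2 3 y ↔ x = y := by
  simp

lemma swap_ne (x : Fin 4) : Equiv.swap (2 : Fin 4) 3 x = 0 ↔ x = 0 := by
  revert x; decide

lemma swap_swap (x : Fin 4) : Equiv.swap (2 : Fin 4) 3 (Equiv.swap 2 3 x) = x := by
  simp

lemma psi_inj {n m : ℕ} (s : ℕ) (hs : s < n) (hm : m ≤ n) :
    Function.Injective (psi s hs hm) := by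
  rintro ⟨⟨p, hp⟩, x⟩ ⟨⟨q, hq⟩, y⟩ h
  simp only [psi] at h
  split_ifs at h <;> simp only [Prod.mk.injEq, Fin.mk.injEq, swap_inj] at h ⊢ <;>
    refine ⟨?_, ?_⟩ <;> first | omega | exact h.2

lemma psi_surj {n m : ℕ} (s : ℕ) (hs : s < n) (hm : m ≤ n) (w : FV n)
    (h : (s ≤ w.1 ∧ (w.1 : ℕ) < s + m) ∨ ((w.1 : ℕ) < s ∧ w.1 + n < s + m)) :
    ∃ u, psi s hs hm u = w := by
  obtain ⟨⟨p, hp⟩, x⟩ := w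
  simp only at h
  rcases h with h | h
  · refine ⟨(⟨p - s, by omega⟩, x), ?_⟩
    have : s + (p - s) = p := by omega
    simp [psi, this, hp]
  · refine ⟨(⟨p + n - s, by omega⟩, Equiv.swap 2 3 x), ?_⟩
    have h1 : s + (p + n - s) = p + n := by omega
    simp [psi, h1]

lemma psi_range {n m : ℕ} (s : ℕ) (hs : s < n) (hm : m ≤ n) (u : FV m) :
    let w := psi s hs hm u
    (s ≤ w.1 ∧ (w.1 : ℕ) < s + m) ∨ ((w.1 : ℕ) < s ∧ w.1 + n < s + m) := by
  have := u.1.2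
  simp only [psi]
  split_ifs <;> simp only <;> omega

lemma psi_adj {n m : ℕ} (s : ℕ) (hs : s < n) (hm : m < n) (hm2 : 3 ≤ m) (u v : FV m)
    (h : (flowerSnark n).Adj (psi s hs hm.le u) (psi s hs hm.le v)) :
    (flowerSnark m).Adj u v := by
  rw [adj_iff (by omega)] at h ⊢
  obtain ⟨⟨p, hp⟩, x⟩ := u
  obtain ⟨⟨q, hq⟩, y⟩ := v
  have e1 : Equiv.swap (2 : Fin 4) 3 1 = 1 := by decide
  have e0 : Equiv.swap (2 : Fin 4) 3 0 = 0 := by decide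
  simp only [psi] at h
  split_ifs at h <;> simp only [R] at h ⊢ <;> revert h <;>
    fin_cases x <;> fin_cases y <;> simp [e0, e1] <;> omega

lemma psi_adj' {n m : ℕ} (s : ℕ) (hs : s < n) (hm : m < n) (hm2 : 3 ≤ m) (u : FV m) (w : FV n)
    (hw : ∀ v, psi s hs hm.le v ≠ w)
    (h : (flowerSnark n).Adj (psi s hs hm.le u) w) :
    ((u.1 : ℕ) = 0 ∧ u.2 ≠ 0) ∨ (u.1 : ℕ) + 1 = m := by
  have hr : ¬ ((s ≤ w.1 ∧ (w.1 : ℕ) < s + m) ∨ ((w.1 : ℕ) < s ∧ w.1 + n < s + m)) := by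
    intro h'
    obtain ⟨v, hv⟩ := psi_surj s hs hm.le w h'
    exact hw v hv
  rw [adj_iff (by omega)] at h
  obtain ⟨⟨p, hp⟩, x⟩ := u
  obtain ⟨⟨q, hq⟩, y⟩ := w
  have e1 : Equiv.swap (2 : Fin 4) 3 1 = 1 := by decide
  have e0 : Equiv.swap (2 : Fin 4) 3 0 = 0 := by decide
  simp only [psi] at h
  simp only at hr
  split_ifs at h <;> simp only [R] at h ⊢ <;> revert h <;>
    fin_cases x <;> fin_cases y <;> simp [e0, e1] <;> omega

lemma full_copy {n : ℕ} (S : Set (FV n)) (i : Fin n) (hi : copyWeight S (i : ℕ) = 4)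
    (x : Fin 4) : (i, x) ∈ S := by
  have hE : {v : FV n | (v.1 : ℕ) = (i : ℕ) % n} = (fun x : Fin 4 => (i, x)) '' Set.univ := by
    ext ⟨p, y⟩
    simp [Nat.mod_eq_of_lt i.2, Fin.ext_iff, eq_comm]
  have hc : ({v : FV n | (v.1 : ℕ) = (i : ℕ) % n}).ncard = 4 := by
    rw [hE, Set.ncard_image_of_injective _ (fun a b h => by simpa using h)]
    simp
  have := Set.eq_of_subset_of_ncard_le
    (Set.inter_subset_right (s := S) (t := {v : FV n | (v.1 : ℕ) = (i : ℕ) % n}))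
    (by rw [hc]; exact hi.ge) (Set.toFinite _)
  have h2 : (i, x) ∈ {v : FV n | (v.1 : ℕ) = (i : ℕ) % n} := by
    simp [Nat.mod_eq_of_lt i.2]
  rw [← this] at h2
  exact h2.1

lemma core {n m : ℕ} (s : ℕ) (hs : s < n) (hm : m < n) (hm2 : 3 ≤ m)
    (S : Set (FV n)) (hS : ConnectedDominating n S)
    (hfull : ∀ u : FV m, (u.1 : ℕ) + 1 = m → psi s hs hm.le u ∈ S) :
    ConnectedDominating m (psi s hs hm.le ⁻¹' S) := by
  have hx0 : ∀ u : FV m, (u.1 : ℕ) = 0 → u.2 ≠ 0 →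
      ∃ v : FV m, (v.1 : ℕ) + 1 = m ∧ v.2 ≠ 0 ∧ (flowerSnark m).Adj u v := by
    intro u h1 h2
    refine ⟨(⟨m - 1, by omega⟩, Equiv.swap 2 3 u.2), by simp; omega,
      fun h => h2 ((swap_ne _).1 h), ?_⟩
    rw [adj_iff (by omega)]
    right; right; right
    refine ⟨by simp; omega, h1, fun h => h2 ((swap_ne _).1 h), by simp⟩
  obtain ⟨hD, hC⟩ := hS
  refine ⟨?_, ?_⟩
  · intro v hv
    obtain ⟨w, hwS, hw⟩ := hD _ hv
    by_cases hr : ∃ v', psi s hs hm.le v' = w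
    · obtain ⟨v', rfl⟩ := hr
      exact ⟨v', hwS, psi_adj s hs hm hm2 _ _ hw⟩
    · push Not at hr
      rcases psi_adj' s hs hm hm2 v w hr hw with ⟨h1, h2⟩ | h
      · obtain ⟨v', h3, -, h4⟩ := hx0 v h1 h2
        exact ⟨v', hfull _ h3, h4⟩
      · exact absurd (hfull _ h) hv
  · let a : FV m := (⟨m - 1, by omega⟩, 0)
    have ha : a.1.1 + 1 = m := by simp [a]; omega
    let A : (psi s hs hm.le ⁻¹' S) := ⟨a, hfull a ha⟩
    have hlast : ∀ u : (psi s hs hm.le ⁻¹' S), (u.1.1 : ℕ) + 1 = m →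
        ((flowerSnark m).induce (psi s hs hm.le ⁻¹' S)).Reachable A u := by
      intro u hu
      by_cases h0 : u.1.2 = 0
      · have : A = u := by
          apply Subtype.ext
          apply Prod.ext
          · apply Fin.ext; simp only [A]; omega
          · exact h0.symm
        rw [this]
      · apply SimpleGraph.Adj.reachable
        rw [SimpleGraph.comap_adj]
        change (flowerSnark m).Adj a u.1
        rw [adj_iff (by omega)]
        left; left
        exact ⟨by omega, rfl, h0⟩
    have hedge : ∀ u : (psi s hs hm.le ⁻¹' S),
        (((u.1.1 : ℕ) = 0 ∧ u.1.2 ≠ 0) ∨ (u.1.1 : ℕ) + 1 = m) →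
        ((flowerSnark m).induce (psi s hs hm.le ⁻¹' S)).Reachable A u := by
      rintro u (⟨h1, h2⟩ | h)
      · obtain ⟨v', h3, -, h4⟩ := hx0 u.1 h1 h2
        refine (hlast ⟨v', hfull _ h3⟩ h3).trans (SimpleGraph.Adj.reachable ?_)
        rw [SimpleGraph.comap_adj]
        exact h4.symm
      · exact hlast u h
    have key : ∀ w : S, ∀ u : (psi s hs hm.le ⁻¹' S), psi s hs hm.le u.1 = w.1 →
        ((flowerSnark m).induce (psi s hs hm.le ⁻¹' S)).Reachable A u := by
      intro w
      have hw := (SimpleGraph.reachable_iff_reflTransGen _ _).1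
        (hC.preconnected ⟨psi s hs hm.le a, hfull a ha⟩ w)
      induction hw with
      | refl =>
        intro u hu
        have : u = A := Subtype.ext (psi_inj s hs hm.le hu)
        rw [this]
      | @tail b c _ hbc ih =>
        intro u hu
        have hbc' : (flowerSnark n).Adj b.1 c.1 := hbc
        rw [← hu] at hbc'
        by_cases hr : ∃ v', psi s hs hm.le v' = b.1
        · obtain ⟨v', hv'⟩ := hr
          have hvS : v' ∈ psi s hs hm.le ⁻¹' S := by
            change psi s hs hm.le v' ∈ S
            rw [hv']; exact b.2
          refine (ih ⟨v', hvS⟩ hv').trans (SimpleGraph.Adj.reachable ?_)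
          rw [SimpleGraph.comap_adj]
          rw [← hv'] at hbc'
          exact psi_adj s hs hm hm2 _ _ hbc'
        · push Not at hr
          exact hedge u (psi_adj' s hs hm hm2 u.1 b.1 hr hbc'.symm)
    have : Nonempty (psi s hs hm.le ⁻¹' S) := ⟨A⟩
    refine ⟨fun u v => ?_⟩
    exact (key ⟨_, u.2⟩ u rfl).symm.trans (key ⟨_, v.2⟩ v rfl)

end FSProof

/-- If `n ≥ 4`, `S` is a connected dominating set of the flower snark `J_n`,
and some copy `J^i` has weight 4 in `S`, then for every `1 ≤ k ≤ n - 3` the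
flower snark `J_{n-k}` has a connected dominating set of cardinality
`|S|` minus the number of vertices of `S` in the copies `J^{i+1}, …, J^{i+k}`
(indices mod `n`). -/
theorem flowerSnark_connectedDominating_weight4 (n : ℕ) (hn : 4 ≤ n)
    (S : Set (FV n)) (hS : ConnectedDominating n S)
    (i : Fin n) (hi : copyWeight S (i : ℕ) = 4) :
    ∀ k : ℕ, 1 ≤ k → k ≤ n - 3 →
      ∃ T : Set (FV (n - k)), ConnectedDominating (n - k) T ∧
        T.ncard = S.ncard -
          (S ∩ {v : FV n | ∃ j : ℕ, 1 ≤ j ∧ j ≤ k ∧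
            (v.1 : ℕ) = ((i : ℕ) + j) % n}).ncard := by
  intro k hk1 hk2
  have hin := i.2
  obtain ⟨s, hs, hs'⟩ : ∃ s, s < n ∧ (s = (i : ℕ) + k + 1 ∨ s + n = (i : ℕ) + k + 1) := by
    rcases Nat.lt_or_ge ((i : ℕ) + k + 1) n with h | h
    · exact ⟨_, h, Or.inl rfl⟩
    · exact ⟨(i : ℕ) + k + 1 - n, by omega, Or.inr (by omega)⟩
  have hm : n - k < n := by omega
  refine ⟨FSProof.psi s hs hm.le ⁻¹' S, FSProof.core s hs hm (by omega) S hS ?_, ?_⟩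
  · intro u hu
    have h1 : (FSProof.psi s hs hm.le u).1 = i := by
      apply Fin.ext
      simp only [FSProof.psi]
      split_ifs <;> simp only <;> omega
    have := FSProof.full_copy S i hi (FSProof.psi s hs hm.le u).2
    rw [← h1] at this
    exact this
  · have h2 := Set.ncard_inter_add_ncard_diff_eq_ncard S {v : FV n | ∃ j : ℕ, 1 ≤ j ∧ j ≤ k ∧
            (v.1 : ℕ) = ((i : ℕ) + j) % n} (Set.toFinite _)
    have h3 : FSProof.psi s hs hm.le '' (FSProof.psi s hs hm.le ⁻¹' S) =
        S \ {v : FV n | ∃ j : ℕ, 1 ≤ j ∧ j ≤ k ∧ (v.1 : ℕ) = ((i : ℕ) + j) % n} := by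
      ext w
      have hwn := w.1.2
      constructor
      · rintro ⟨u, hu, rfl⟩
        refine ⟨hu, ?_⟩
        rintro ⟨j, hj1, hj2, hj⟩
        have hr := FSProof.psi_range s hs hm.le u
        simp only at hr
        rcases Nat.lt_or_ge ((i : ℕ) + j) n with h | h
        · rw [Nat.mod_eq_of_lt h] at hj
          omega
        · rw [Nat.mod_eq_sub_mod h, Nat.mod_eq_of_lt (by omega)] at hj
          omega
      · rintro ⟨hw, hn'⟩
        have : ∃ u, FSProof.psi s hs hm.le u = w := by
          apply FSProof.psi_surj
          by_contra hcon
          apply hn'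
          rcases Nat.lt_or_ge (i : ℕ) (w.1 : ℕ) with h | h
          · refine ⟨w.1 - i, by omega, by omega, ?_⟩
            rw [Nat.mod_eq_of_lt (by omega)]; omega
          · refine ⟨w.1 + n - i, by omega, by omega, ?_⟩
            rw [Nat.mod_eq_sub_mod (by omega), Nat.mod_eq_of_lt (by omega)]; omega
        obtain ⟨u, rfl⟩ := this
        exact ⟨u, hw, rfl⟩
    rw [← Set.ncard_image_of_injective _ (FSProof.psi_inj s hs hm.le), h3]
    omega
end

section
/- Suppose n ≥ 5 is odd and the connected domination number of the flower snark J_{n−1} equals 2n − 2. If S is a connected dominating set of J_n with |S| = 2n − 1, then the number of copies J^i having weight 4 in S is even. -/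
open Classical in
theorem aux_count {V : Type} [Fintype V] (G : SimpleGraph V) (S : Finset V)
    (hdeg : ∀ v, G.degree v ≤ 3) (hconn : (G.induce (S : Set V)).Connected)
    (hdom : ∀ v ∉ S, ∃ w ∈ S, G.Adj v w) (hc : 2 * S.card + 2 ≤ Fintype.card V) :
    ∀ v ∉ S, (S.filter (fun w => G.Adj v w)).card ≤ 1 := by
  have h1 : ∑ v ∈ S, G.degree v ≤ S.card * 3 := Finset.sum_le_card_nsmul _ _ _ (fun v _ => hdeg v)
  have h2 : ∀ v, G.degree v = (S.filter (fun w => G.Adj v w)).card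
      + (Sᶜ.filter (fun w => G.Adj v w)).card := by
    intro v
    rw [← SimpleGraph.card_neighborFinset_eq_degree, SimpleGraph.neighborFinset_eq_filter,
      ← Finset.card_union_of_disjoint, ← Finset.filter_union, Finset.union_compl]
    exact Finset.disjoint_filter_filter disjoint_compl_right
  have h3 : ∑ v ∈ S, (Sᶜ.filter (fun w => G.Adj v w)).card
      = ∑ v ∈ Sᶜ, (S.filter (fun w => G.Adj v w)).card := by
    have := Finset.sum_card_bipartiteAbove_eq_sum_card_bipartiteBelow (s := S) (t := Sᶜ)
      (fun v w => G.Adj v w)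
    simp only [Finset.bipartiteAbove, Finset.bipartiteBelow] at this
    rw [this]
    simp only [G.adj_comm]
  have h4 : 2 * (S.card - 1) ≤ ∑ v ∈ S, (S.filter (fun w => G.Adj v w)).card := by
    have e1 := hconn.card_vert_le_card_edgeSet_add_one
    have e2 := (G.induce (S : Set V)).sum_degrees_eq_twice_card_edges
    have e3 : ∀ v : (S : Set V), (G.induce (S : Set V)).degree v
        = (S.filter (fun w => G.Adj v w)).card := by
      intro v
      rw [← SimpleGraph.card_neighborFinset_eq_degree, SimpleGraph.neighborFinset_eq_filter]
      rw [← Finset.card_map (Function.Embedding.subtype _)]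
      congr 1
      ext w
      simp [and_comm]
    have e4 : ∑ v ∈ S, (S.filter (fun w => G.Adj v w)).card
        = ∑ v : (S : Set V), (G.induce (S : Set V)).degree v := by
      rw [Finset.sum_congr rfl (fun v _ => e3 v)]
      exact (Finset.sum_coe_sort S (fun v => (S.filter (fun w => G.Adj v w)).card)).symm
    rw [e4, e2]
    have e5 : Nat.card (S : Set V) = S.card := by simp
    have e6 : Nat.card (G.induce (S : Set V)).edgeSet = (G.induce (S : Set V)).edgeFinset.card := by
      rw [Nat.card_eq_fintype_card, SimpleGraph.edgeFinset_card]
    omega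
  have h5 : ∑ v ∈ S, G.degree v = ∑ v ∈ S, (S.filter (fun w => G.Adj v w)).card
      + ∑ v ∈ S, (Sᶜ.filter (fun w => G.Adj v w)).card := by
    rw [← Finset.sum_add_distrib]
    exact Finset.sum_congr rfl (fun v _ => h2 v)
  have h6 : Sᶜ.card = Fintype.card V - S.card := Finset.card_compl S
  intro v hv
  by_contra hlt
  have h7 : ∑ v ∈ Sᶜ, 1 < ∑ v ∈ Sᶜ, (S.filter (fun w => G.Adj v w)).card := by
    apply Finset.sum_lt_sum
    · intro x hx
      obtain ⟨w, hw, hxw⟩ := hdom x (by simpa using hx)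
      exact Finset.card_pos.mpr ⟨w, by simp [hw, hxw]⟩
    · exact ⟨v, by simpa using hv, by omega⟩
  simp only [Finset.sum_const, smul_eq_mul, mul_one] at h7
  have h8 : 0 < S.card := by
    obtain ⟨w, hw, _⟩ := hdom v hv
    exact Finset.card_pos.mpr ⟨w, hw⟩
  omega

/-- The covering map from the untwisted infinite strip. -/
def cov (n : ℕ) (hn : 0 < n) (j : ℕ) (t : Fin 4) : FV n :=
  (⟨j % n, Nat.mod_lt _ hn⟩, if (j / n) % 2 = 0 then t else Equiv.swap 2 3 t)

theorem div_mod_succ (n j : ℕ) (hn : 0 < n) :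
    ((j + 1) % n = j % n + 1 ∧ (j + 1) / n = j / n ∧ j % n + 1 < n) ∨
    (j % n = n - 1 ∧ (j + 1) % n = 0 ∧ (j + 1) / n = j / n + 1) := by
  have h0 := Nat.mod_lt j hn
  have h1 := Nat.div_add_mod j n
  by_cases h : j % n + 1 < n
  · left
    have : j + 1 = (j % n + 1) + n * (j / n) := by omega
    refine ⟨?_, ?_, h⟩
    · rw [this, Nat.add_mul_mod_self_left, Nat.mod_eq_of_lt h]
    · conv_lhs => rw [this]
      rw [Nat.add_mul_div_left _ _ hn, Nat.div_eq_of_lt h]; simp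
  · right
    have : j + 1 = n * (j / n + 1) := by rw [mul_add]; omega
    refine ⟨by omega, ?_, ?_⟩
    · rw [this]; simp
    · conv_lhs => rw [this]
      rw [Nat.mul_div_cancel_left _ hn]


theorem nbr_zero (n : ℕ) (hn : 5 ≤ n) (j : ℕ) (w : FV n) :
    (flowerSnark n).Adj (cov n (by omega) j 0) w ↔
      w = cov n (by omega) j 1 ∨ w = cov n (by omega) j 2 ∨ w = cov n (by omega) j 3 := by
  obtain ⟨k, x⟩ := w
  unfold flowerSnark cov
  generalize (⟨j % n, _⟩ : Fin n) = r
  by_cases hp : j / n % 2 = 0 <;> fin_cases x <;>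
    simp [hp, Equiv.swap_apply_def, Prod.ext_iff, SimpleGraph.fromRel_adj, eq_comm]

set_option maxHeartbeats 2000000 in
theorem nbr_aux (n : ℕ) (hn : 5 ≤ n) (r0 r1 r2 q0 q1 q2 : ℕ) (l0 : r0 < n) (l1 : r1 < n)
    (l2 : r2 < n)
    (h1 : (r1 = r0 + 1 ∧ q1 = q0 ∧ r0 + 1 < n) ∨ (r0 = n - 1 ∧ r1 = 0 ∧ q1 = q0 + 1))
    (h2 : (r2 = r1 + 1 ∧ q2 = q1 ∧ r1 + 1 < n) ∨ (r1 = n - 1 ∧ r2 = 0 ∧ q2 = q1 + 1))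
    (t : Fin 4) (ht : t ≠ 0) (w : FV n) :
    (flowerSnark n).Adj (⟨r1, l1⟩, if q1 % 2 = 0 then t else Equiv.swap 2 3 t) w ↔
      w = (⟨r1, l1⟩, if q1 % 2 = 0 then 0 else Equiv.swap 2 3 0) ∨
      w = (⟨r0, l0⟩, if q0 % 2 = 0 then t else Equiv.swap 2 3 t) ∨
      w = (⟨r2, l2⟩, if q2 % 2 = 0 then t else Equiv.swap 2 3 t) := by
  obtain ⟨⟨k, hk⟩, x⟩ := w
  have h4 := div_mod_succ n k (by omega)
  rw [Nat.mod_eq_of_lt hk] at h4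
  have h5 := div_mod_succ n r1 (by omega)
  rw [Nat.mod_eq_of_lt l1] at h5
  unfold flowerSnark
  have p0 : q0 % 2 = 0 ∨ q0 % 2 = 1 := by omega
  have p1 : q1 % 2 = 0 ∨ q1 % 2 = 1 := by omega
  have p2 : q2 % 2 = 0 ∨ q2 % 2 = 1 := by omega
  rcases p0 with p0 | p0 <;> rcases p1 with p1 | p1 <;> rcases p2 with p2 | p2 <;>
  (try omega) <;> fin_cases t <;> (try exact absurd rfl ht) <;> fin_cases x <;>
  simp [p0, p1, p2, Equiv.swap_apply_def, Prod.ext_iff, SimpleGraph.fromRel_adj] <;> omega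

theorem nbr_succ (n : ℕ) (hn : 5 ≤ n) (j : ℕ) (t : Fin 4) (ht : t ≠ 0) (w : FV n) :
    (flowerSnark n).Adj (cov n (by omega) (j+1) t) w ↔
      w = cov n (by omega) (j+1) 0 ∨ w = cov n (by omega) j t ∨ w = cov n (by omega) (j+2) t :=
  nbr_aux n hn _ _ _ _ _ _ _ _ _ (div_mod_succ n j (by omega)) (div_mod_succ n (j+1) (by omega))
    t ht w

theorem cov_surj (n : ℕ) (hn : 0 < n) (v : FV n) : ∃ j t, v = cov n hn (j+1) t := by
  obtain ⟨⟨k, hk⟩, x⟩ := v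
  refine ⟨k + 2 * n - 1, x, ?_⟩
  have e : k + 2 * n - 1 + 1 = k + n * 2 := by omega
  have e1 : (k + n * 2) % n = k := by rw [Nat.add_mul_mod_self_left, Nat.mod_eq_of_lt hk]
  have e2 : (k + n * 2) / n = 2 := by
    rw [Nat.add_mul_div_left _ _ hn, Nat.div_eq_of_lt hk]
  simp [cov, e, e1, e2]

open Classical in
theorem deg_le (n : ℕ) (hn : 5 ≤ n) (v : FV n) : (flowerSnark n).degree v ≤ 3 := by
  obtain ⟨j, t, rfl⟩ := cov_surj n (by omega) v
  rw [← SimpleGraph.card_neighborFinset_eq_degree]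
  by_cases ht : t = 0
  · subst ht
    refine le_trans (Finset.card_le_card (t := {cov n (by omega) (j+1) 1, cov n (by omega) (j+1) 2,
      cov n (by omega) (j+1) 3}) ?_) Finset.card_le_three
    intro w hw
    rw [SimpleGraph.mem_neighborFinset, nbr_zero n hn] at hw
    simpa using hw
  · refine le_trans (Finset.card_le_card (t := {cov n (by omega) (j+1) 0, cov n (by omega) j t,
      cov n (by omega) (j+2) t}) ?_) Finset.card_le_three
    intro w hw
    rw [SimpleGraph.mem_neighborFinset, nbr_succ n hn j t ht] at hw
    simpa using hw

/-- Exactly one of three propositions holds. -/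
def One3 (p q r : Prop) : Prop := (p ∧ ¬ q ∧ ¬ r) ∨ (¬ p ∧ q ∧ ¬ r) ∨ (¬ p ∧ ¬ q ∧ r)

theorem unique_nbr (n : ℕ) (hn : 5 ≤ n) (S : Set (FV n)) (hS : ConnectedDominating n S)
    (hcard : S.ncard = 2 * n - 1) (v : FV n) (hv : v ∉ S) (x y z : FV n)
    (hxy : x ≠ y) (hxz : x ≠ z) (hyz : y ≠ z)
    (hN : ∀ w, (flowerSnark n).Adj v w ↔ w = x ∨ w = y ∨ w = z) :
    One3 (x ∈ S) (y ∈ S) (z ∈ S) := by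
  classical
  obtain ⟨w, hw, hvw⟩ := hS.1 v hv
  have key := aux_count (flowerSnark n) S.toFinset (fun v => by convert deg_le n hn v)
    (by rw [Set.coe_toFinset]; exact hS.2)
    (fun v hv => by
      obtain ⟨w, hw, h⟩ := hS.1 v (by simpa using hv)
      exact ⟨w, by simpa using hw, h⟩)
    (by
      rw [← Set.ncard_eq_toFinset_card', hcard]
      simp
      omega) v (by simpa using hv)
  rw [Finset.card_le_one] at key
  have key2 : ∀ p q, p ∈ S → q ∈ S → (p = x ∨ p = y ∨ p = z) → (q = x ∨ q = y ∨ q = z) → p = q := by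
    intro p q hp hq h1 h2
    exact key p (by simp [hp, (hN p).2 h1]) q (by simp [hq, (hN q).2 h2])
  have k1 : ¬ (x ∈ S ∧ y ∈ S) := fun h => hxy (key2 _ _ h.1 h.2 (by simp) (by simp))
  have k2 : ¬ (x ∈ S ∧ z ∈ S) := fun h => hxz (key2 _ _ h.1 h.2 (by simp) (by simp))
  have k3 : ¬ (y ∈ S ∧ z ∈ S) := fun h => hyz (key2 _ _ h.1 h.2 (by simp) (by simp))
  have k4 : x ∈ S ∨ y ∈ S ∨ z ∈ S := by
    rcases (hN w).1 hvw with rfl | rfl | rfl <;> simp [hw]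
  unfold One3
  tauto

theorem cov_ne (n : ℕ) (hn : 0 < n) (j : ℕ) (s t : Fin 4) (h : s ≠ t) :
    cov n hn j s ≠ cov n hn j t := by
  intro e
  simp only [cov, Prod.mk.injEq, true_and] at e
  split_ifs at e
  · exact h e
  · exact h ((Equiv.swap (2 : Fin 4) 3).injective e)

theorem cov_ne1 (n : ℕ) (hn : 5 ≤ n) (j : ℕ) (s t : Fin 4) :
    cov n (by omega) (j+1) s ≠ cov n (by omega) j t := by
  intro e
  simp only [cov, Prod.mk.injEq, Fin.mk.injEq] at e
  have := div_mod_succ n j (by omega)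
  omega

theorem cov_ne2 (n : ℕ) (hn : 5 ≤ n) (j : ℕ) (s t : Fin 4) :
    cov n (by omega) (j+2) s ≠ cov n (by omega) j t := by
  intro e
  simp only [cov, Prod.mk.injEq, Fin.mk.injEq] at e
  have h1 := div_mod_succ n j (by omega)
  have h2 : ((j + 2) % n = (j+1) % n + 1 ∧ _ ∧ _) ∨ (_ ∧ (j + 2) % n = 0 ∧ _) :=
    div_mod_succ n (j+1) (by omega)
  omega

open Classical in
/-- Weight of a copy along the strip. -/
noncomputable def wt (s : ℕ → Fin 4 → Prop) (j : ℕ) : ℤ :=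
  (if s j 0 then 1 else 0) + (if s j 1 then 1 else 0) + (if s j 2 then 1 else 0)
    + (if s j 3 then 1 else 0)

theorem strip (s : ℕ → Fin 4 → Prop)
    (hA : ∀ j, ¬ s j 0 → One3 (s j 1) (s j 2) (s j 3))
    (hB : ∀ j t, t ≠ 0 → ¬ s (j+1) t → One3 (s (j+1) 0) (s j t) (s (j+2) t))
    (i : ℕ) (hi : ∀ t, s i t) (m : ℕ) :
    ((∀ t, s (i+m) t) ∧ 0 ≤ ∑ l ∈ Finset.range m, (wt s (i+l) - 2)) ∨
    (∃ m', m = m' + 1 ∧ (∀ t, s (i+m') t) ∧ ¬ s (i+m) 0 ∧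
      2 ≤ ∑ l ∈ Finset.range m, (wt s (i+l) - 2)) ∨
    (∃ m', m = m' + 1 ∧ One3 (s (i+m) 1) (s (i+m) 2) (s (i+m) 3) ∧
      (∀ t, t ≠ 0 → s (i+m') t → s (i+m) t) ∧
      1 ≤ ∑ l ∈ Finset.range m, (wt s (i+l) - 2)) := by
  induction m with
  | zero => left; simpa using hi
  | succ m ih =>
    rw [Finset.sum_range_succ]
    generalize ∑ l ∈ Finset.range m, (wt s (i+l) - 2) = P at *
    rcases ih with ⟨h1, h2⟩ | ⟨m', rfl, h1, h2, h3⟩ | ⟨m', rfl, h1, h2, h3⟩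
    · have hw : wt s (i+m) = 4 := by simp [wt, h1]
      by_cases h0 : s (i+m+1) 0
      · left
        refine ⟨?_, by omega⟩
        intro t
        by_cases ht : t = 0
        · subst ht; exact h0
        · by_contra hc
          have := hB (i+m) t ht hc
          have := h1 t
          simp_all [One3]
      · right; left
        exact ⟨m, rfl, h1, h0, by omega⟩
    · have B1 := hB (i+m') 1 (by decide)
      have B2 := hB (i+m') 2 (by decide)
      have B3 := hB (i+m') 3 (by decide)
      have C1 := hB (i+m'+1) 1 (by decide)
      have C2 := hB (i+m'+1) 2 (by decide)
      have C3 := hB (i+m'+1) 3 (by decide)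
      have A1 := hA (i+m'+1) h2
      have A2 := hA (i+m'+2)
      have h2' : ¬ s (i+m'+1) 0 := h2
      have hw : wt s (i+(m'+1)) = 1 := by
        rcases A1 with h | h | h <;> simp [wt, h, h2', ← add_assoc]
      right; right
      simp only [← add_assoc] at *
      refine ⟨m'+1, rfl, ?_, ?_, by omega⟩
      · have := h1 1
        have := h1 2
        have := h1 3
        simp only [add_assoc, Nat.reduceAdd] at *
        unfold One3 at *
        grind
      · have := h1 1
        have := h1 2
        have := h1 3
        simp only [add_assoc, Nat.reduceAdd] at *
        unfold One3 at *
        intro t ht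
        fin_cases t <;> simp at * <;> grind
    · have B1 := hB (i+m') 1 (by decide)
      have B2 := hB (i+m') 2 (by decide)
      have B3 := hB (i+m') 3 (by decide)
      have C1 := hB (i+m'+1) 1 (by decide)
      have C2 := hB (i+m'+1) 2 (by decide)
      have C3 := hB (i+m'+1) 3 (by decide)
      have A2 := hA (i+m'+2)
      have D1 := h2 1 (by decide)
      have D2 := h2 2 (by decide)
      have D3 := h2 3 (by decide)
      simp only [add_assoc, Nat.reduceAdd] at *
      by_cases h0 : s (i+(m'+1)) 0
      · have hw : wt s (i+(m'+1)) = 2 := by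
          rcases h1 with h | h | h <;> simp [wt, h, h0]
        right; right
        refine ⟨m'+1, rfl, ?_, ?_, by omega⟩
        · unfold One3 at *
          grind
        · unfold One3 at *
          intro t ht
          fin_cases t <;> simp at * <;> grind
      · have hw : wt s (i+(m'+1)) = 1 := by
          rcases h1 with h | h | h <;> simp [wt, h, h0]
        left
        refine ⟨?_, by omega⟩
        unfold One3 at *
        intro t
        fin_cases t <;> simp at * <;> grind

theorem wt_cov (n : ℕ) (hn : 0 < n) (S : Set (FV n)) (j : ℕ) :
    wt (fun j t => cov n hn j t ∈ S) j = copyWeight S j := by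
  classical
  have e : S ∩ {v : FV n | (v.1 : ℕ) = j % n}
      = ((Finset.univ.filter (fun t : Fin 4 => cov n hn j t ∈ S)).image (cov n hn j) : Finset (FV n)) := by
    ext ⟨⟨k, hk⟩, x⟩
    simp only [Set.mem_inter_iff, Set.mem_ofPred_eq, Finset.coe_image, Finset.coe_filter,
      Finset.mem_univ, true_and, Set.mem_image]
    constructor
    · rintro ⟨h1, rfl⟩
      have : cov n hn j (if (j / n) % 2 = 0 then x else Equiv.swap 2 3 x) = (⟨j % n, hk⟩, x) := by
        unfold cov
        split_ifs <;> simp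
      exact ⟨_, by rw [this]; exact h1, this⟩
    · rintro ⟨t, h1, h2⟩
      refine ⟨h2 ▸ h1, ?_⟩
      have h3 := congrArg (fun v : FV n => (v.1 : ℕ)) h2
      exact h3.symm
  unfold copyWeight
  rw [e, Set.ncard_coe_finset, Finset.card_image_of_injective]
  · rw [Finset.card_filter, Fin.sum_univ_four]
    simp [wt]
  · intro s t h
    by_contra hne
    exact cov_ne n hn j s t hne h

theorem sum_copy (n : ℕ) (hn : 0 < n) (S : Set (FV n)) :
    ∑ l ∈ Finset.range n, copyWeight S l = S.ncard := by
  classical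
  rw [Set.ncard_eq_toFinset_card', Finset.card_eq_sum_card_fiberwise (t := Finset.range n)
    (f := fun v : FV n => (v.1 : ℕ)) (s := S.toFinset) (by intro v; simp)]
  refine Finset.sum_congr rfl (fun l hl => ?_)
  rw [Finset.mem_range] at hl
  unfold copyWeight
  rw [Nat.mod_eq_of_lt hl, Set.ncard_eq_toFinset_card']
  congr 1
  ext v
  simp

theorem sum_shift (n : ℕ) (f : ℕ → ℤ) (hf : ∀ j, f (j + n) = f j) (i : ℕ) :
    ∑ l ∈ Finset.range n, f (i + l) = ∑ l ∈ Finset.range n, f l := by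
  induction i with
  | zero => simp
  | succ i ih =>
    rw [← ih]
    have h1 := Finset.sum_range_succ (fun l => f (i + l)) n
    have h2 := Finset.sum_range_succ' (fun l => f (i + l)) n
    have h3 := hf i
    simp only [add_zero] at h2
    have h4 : ∀ l, f (i + 1 + l) = f (i + (l + 1)) := fun l => by congr 1; ring
    simp only [h4]
    linarith

/-- Suppose `n ≥ 5` is odd and the connected domination number of the flower
snark `J_{n-1}` equals `2n - 2`. If `S` is a connected dominating set of `J_n`
with `|S| = 2n - 1`, then the number of copies having weight 4 in `S` is
even. -/
theorem flowerSnark_connectedDominating_even_weight4 (n : ℕ) (hn : 5 ≤ n)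
    (hodd : Odd n) (hprev : connectedDominationNumber (n - 1) = 2 * n - 2)
    (S : Set (FV n)) (hS : ConnectedDominating n S)
    (hcard : S.ncard = 2 * n - 1) :
    Even {i : Fin n | copyWeight S (i : ℕ) = 4}.ncard := by
  suffices h : {i : Fin n | copyWeight S (i : ℕ) = 4} = ∅ by
    rw [h]; simp
  have hn0 : 0 < n := by omega
  rw [Set.eq_empty_iff_forall_notMem]
  rintro ⟨i, hi⟩ h4
  simp only [Set.mem_ofPred_eq] at h4
  have hper : ∀ j, copyWeight S (j + n) = copyWeight S j := by
    intro j; simp [copyWeight]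
  have full : ∀ j, copyWeight S j = 4 ↔ ∀ t, cov n hn0 j t ∈ S := by
    intro j
    have h := wt_cov n hn0 S j
    constructor
    · intro h'
      rw [h'] at h
      unfold wt at h
      intro t
      by_contra hc
      fin_cases t <;> simp at hc <;> simp [hc] at h <;> split_ifs at h <;> simp at h
    · intro h'
      simp [wt, h'] at h
      omega
  have key := strip (fun j t => cov n hn0 j t ∈ S)
    (fun j h => unique_nbr n hn S hS hcard _ h _ _ _ (cov_ne _ _ _ _ _ (by decide))
      (cov_ne _ _ _ _ _ (by decide)) (cov_ne _ _ _ _ _ (by decide)) (nbr_zero n hn j))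
    (fun j t ht h => unique_nbr n hn S hS hcard _ h _ _ _ (cov_ne1 n hn _ _ _)
      (cov_ne1 n hn (j+1) _ _).symm (cov_ne2 n hn _ _ _).symm (nbr_succ n hn j t ht))
    i ((full i).1 h4) n
  have hend := (full (i+n)).1 (by rw [hper]; exact h4)
  have hsum := sum_shift n (fun l => wt (fun j t => cov n hn0 j t ∈ S) l - 2)
    (fun j => by simp only [wt_cov, hper]) i
  rw [hsum] at key
  simp only [wt_cov, Finset.sum_sub_distrib] at key
  rw [← Nat.cast_sum, sum_copy n hn0, hcard] at key
  simp only [Finset.sum_const, Finset.card_range] at key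
  rcases key with ⟨_, h⟩ | ⟨_, _, _, h, _⟩ | ⟨_, _, h, _⟩
  · simp at h
    omega
  · exact h (hend 0)
  · have := hend 1
    have := hend 2
    simp_all [One3]
end
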